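/- arXiv:1301.6509 — 2 statements merged into one kernel-verified Lean document; each statement's English description precedes it below -/
import Mathlib

section
/- Let σ₁,…,σ_k be non-crossing RGFs, let q < k be an index, and let σ′_q be a non-crossing RGF that is cc-equivalent to σ_q. Then the pattern σ = 1[σ₁]1[σ₂]1⋯1[σ_{q−1}]1[σ_q]1[σ_{q+1}]1⋯1[σ_k]1 is cc-equivalent to the pattern σ′ = 1[σ₁]1[σ₂]1⋯1[σ_{q−1}]1[σ′_q]1[σ_{q+1}]1⋯1[σ_k]1 obtained by replacing σ_q with σ′_q. -/
/-- A restricted growth function (canonical sequential form of a set partition):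
a word over the positive integers whose first letter is 1 and where each letter
is at most one more than the maximum of the preceding letters. -/
def IsRGF (w : List ℕ) : Prop :=
  (∀ x ∈ w, 1 ≤ x) ∧
  (w ≠ [] → w.getD 0 0 = 1) ∧
  ∀ i, i + 1 < w.length → w.getD (i + 1) 0 ≤ ((w.take (i + 1)).foldr max 0) + 1

/-- Two words of the same length are order-isomorphic: corresponding entries
compare the same way (this preserves equalities as well). -/
def WordOrdIso (s t : List ℕ) : Prop :=
  s.length = t.length ∧
  ∀ i j, i < s.length → j < s.length →
    (s.getD i 0 < s.getD j 0 ↔ t.getD i 0 < t.getD j 0)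

/-- `w` contains the pattern `p`: a subsequence of `w` is order-isomorphic to `p`. -/
def PatContains (w p : List ℕ) : Prop := ∃ s : List ℕ, s.Sublist w ∧ WordOrdIso s p

/-- `w` avoids the pattern `p`. -/
def PatAvoids (w p : List ℕ) : Prop := ¬ PatContains w p

/-- `pCount n T` = number of RGFs of length `n` avoiding every pattern in `T`. -/
noncomputable def pCount (n : ℕ) (T : Set (List ℕ)) : ℕ :=
  {w : List ℕ | IsRGF w ∧ w.length = n ∧ ∀ p ∈ T, PatAvoids w p}.ncard

/-- A word is non-crossing if it avoids the pattern 1212. -/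
def NonCrossing (w : List ℕ) : Prop := PatAvoids w [1,2,1,2]

/-- The number of distinct letters of an RGF equals its maximum letter. -/
def nLetters (w : List ℕ) : ℕ := w.foldr max 0

/-- `rgfComp a b` is the pattern `a[b]`: `a` followed by `b` shifted up by the
number of distinct letters of `a`. -/
def rgfComp (a b : List ℕ) : List ℕ := a ++ b.map (· + nLetters a)

/-- A connected RGF: nonempty and not expressible as `σ[τ]` with `σ, τ` nonempty RGFs. -/
def Connected (w : List ℕ) : Prop :=
  w ≠ [] ∧ ¬ ∃ a b : List ℕ, IsRGF a ∧ IsRGF b ∧ a ≠ [] ∧ b ≠ [] ∧ w = rgfComp a b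

/-- `w` decomposes as `σ₁[σ₂]⋯[σ_p]` with each `σ_i` a connected RGF. -/
def HasComponents (w : List ℕ) (p : ℕ) : Prop :=
  ∃ l : List (List ℕ), l.length = p ∧ (∀ c ∈ l, IsRGF c ∧ Connected c) ∧
    w = l.foldr rgfComp []

/-- Number of non-crossing RGFs of length `n` with `p` components avoiding `σ`. -/
noncomputable def ncCount (n p : ℕ) (σ : List ℕ) : ℕ :=
  {w : List ℕ | IsRGF w ∧ NonCrossing w ∧ w.length = n ∧ PatAvoids w σ ∧
    HasComponents w p}.ncard

/-- cc-equivalence of patterns. -/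
def ccEquiv (σ τ : List ℕ) : Prop := ∀ n p : ℕ, ncCount n p σ = ncCount n p τ

/-- Number of non-crossing RGFs of length `n` avoiding `σ`. -/
noncomputable def ncAvoidCount (n : ℕ) (σ : List ℕ) : ℕ :=
  {w : List ℕ | IsRGF w ∧ NonCrossing w ∧ w.length = n ∧ PatAvoids w σ}.ncard

/-- Auxiliary: builds `1[σ₁]1[σ₂]⋯1[σ_k]1` with accumulated letter shift `s`. -/
def onePatAux : ℕ → List (List ℕ) → List ℕ
  | _, [] => [1]
  | s, c :: rest => 1 :: (c.map (· + s) ++ onePatAux (s + nLetters c) rest)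

/-- The pattern `1[σ₁]1[σ₂]⋯1[σ_k]1`. -/
def onePat (l : List (List ℕ)) : List ℕ := onePatAux 1 l

/-- The pattern `1[σ]1[τ]`. -/
def pat2 (σ τ : List ℕ) : List ℕ :=
  1 :: (σ.map (· + 1) ++ 1 :: τ.map (· + (1 + nLetters σ)))


/-! ### Restricted growth words, recursively -/

def RG : ℕ → List ℕ → Prop
  | _, [] => True
  | s, x :: u => 1 ≤ x ∧ x ≤ s + 1 ∧ RG (max s x) u

@[simp] lemma nLetters_nil : nLetters [] = 0 := rfl
@[simp] lemma nLetters_cons (x : ℕ) (w : List ℕ) : nLetters (x :: w) = max x (nLetters w) := rfl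

@[simp] lemma nLetters_append (u v : List ℕ) :
    nLetters (u ++ v) = max (nLetters u) (nLetters v) := by
  induction u with
  | nil => simp
  | cons x u ih => simp [ih, max_assoc]

lemma le_nLetters {w : List ℕ} {x : ℕ} (h : x ∈ w) : x ≤ nLetters w := by
  induction w with
  | nil => simp at h
  | cons y w ih =>
    rcases List.mem_cons.1 h with rfl | h
    · simp
    · simp [ih h]

lemma nLetters_map_add {w : List ℕ} (hw : w ≠ []) (s : ℕ) :
    nLetters (w.map (· + s)) = nLetters w + s := by
  induction w with
  | nil => exact absurd rfl hw
  | cons x w ih =>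
    by_cases h : w = []
    · subst h; simp
    · simp only [List.map_cons, nLetters_cons, ih h]; omega

lemma max_nLetters_map_add (w : List ℕ) (s : ℕ) :
    max s (nLetters (w.map (· + s))) = s + nLetters w := by
  by_cases hw : w = []
  · subst hw; simp
  · rw [nLetters_map_add hw]; omega

lemma rg_append (u v : List ℕ) : ∀ s, RG s (u ++ v) ↔ RG s u ∧ RG (max s (nLetters u)) v := by
  induction u with
  | nil => simp [RG]
  | cons x u ih => intro s; simp [RG, ih, max_assoc, and_assoc]

lemma rg_pos {w : List ℕ} : ∀ {s}, RG s w → ∀ x ∈ w, 1 ≤ x := by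
  induction w with
  | nil => simp
  | cons y w ih =>
    intro s h x hx
    rcases List.mem_cons.1 hx with rfl | hx
    · exact h.1
    · exact ih h.2.2 x hx

lemma rg_iff_getD (w : List ℕ) : ∀ s, RG s w ↔ (∀ x ∈ w, 1 ≤ x) ∧
    ∀ i, i < w.length → w.getD i 0 ≤ max s ((w.take i).foldr max 0) + 1 := by
  induction w with
  | nil => simp [RG]
  | cons y w ih =>
    intro s
    simp only [RG, ih, List.mem_cons, forall_eq_or_imp]
    constructor
    · rintro ⟨h1, h2, h3, h4⟩
      refine ⟨⟨h1, h3⟩, ?_⟩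
      intro i hi
      cases i with
      | zero => simpa using h2
      | succ i =>
        have := h4 i (by simpa using hi)
        simpa [max_assoc] using this
    · rintro ⟨⟨h1, h3⟩, h4⟩
      refine ⟨h1, by simpa using h4 0 (by simp), h3, ?_⟩
      intro i hi
      have := h4 (i+1) (by simpa using hi)
      simpa [max_assoc] using this

lemma isRGF_iff (w : List ℕ) : IsRGF w ↔ RG 0 w := by
  rw [rg_iff_getD]
  constructor
  · rintro ⟨h1, h2, h3⟩
    refine ⟨h1, ?_⟩
    intro i hi
    cases i with
    | zero =>
      have := h2 (by rintro rfl; simp at hi)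
      omega
    | succ i => simpa using h3 i hi
  · rintro ⟨h1, h2⟩
    refine ⟨h1, ?_, ?_⟩
    · intro hw
      cases w with
      | nil => exact absurd rfl hw
      | cons x w =>
        have := h2 0 (by simp)
        have h3 := h1 x (by simp)
        simp at this ⊢
        omega
    · intro i hi
      simpa using h2 (i+1) hi

lemma rg_shift (s : ℕ) (b : List ℕ) : ∀ k, RG k b → RG (k + s) (b.map (· + s)) := by
  induction b with
  | nil => simp [RG]
  | cons x b ih =>
    intro k h
    simp only [List.map_cons, RG]
    refine ⟨by have := h.1; omega, by have := h.2.1; omega, ?_⟩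
    have := ih _ h.2.2
    convert this using 1
    omega

lemma rg_unshift (s : ℕ) (b : List ℕ) (hb : ∀ x ∈ b, 1 ≤ x) :
    ∀ k, RG (k + s) (b.map (· + s)) → RG k b := by
  induction b with
  | nil => simp [RG]
  | cons x b ih =>
    intro k h
    simp only [List.map_cons, RG] at h ⊢
    refine ⟨hb x (by simp), by have := h.2.1; omega, ?_⟩
    apply ih (fun y hy => hb y (by simp [hy]))
    convert h.2.2 using 1
    omega

lemma rg_mono_start (b : List ℕ) : ∀ {k l}, k ≤ l → RG k b → RG l b := by
  induction b with
  | nil => simp [RG]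
  | cons x b ih =>
    intro k l hkl h
    exact ⟨h.1, by have := h.2.1; omega, ih (by omega) h.2.2⟩

lemma rg_full (b : List ℕ) : ∀ k, RG k b → ∀ x, k < x → x ≤ nLetters b → x ∈ b := by
  induction b with
  | nil => intro k _ x h1 h2; simp at h2; omega
  | cons y b ih =>
    intro k h x h1 h2
    by_cases hxy : x = y
    · simp [hxy]
    · have := h.2.1
      simp only [nLetters_cons] at h2
      exact List.mem_cons_of_mem _ (ih _ h.2.2 x (by omega) (by omega))

lemma rg_le_length (b : List ℕ) : ∀ k, RG k b → nLetters b ≤ k + b.length := by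
  induction b with
  | nil => simp
  | cons y b ih =>
    intro k h
    have := ih _ h.2.2
    have := h.2.1
    simp only [nLetters_cons, List.length_cons]
    omega

lemma isRGF_pos {w : List ℕ} (h : IsRGF w) : ∀ x ∈ w, 1 ≤ x := h.1

lemma isRGF_nil : IsRGF [] := by rw [isRGF_iff]; trivial

lemma isRGF_nLetters_pos {w : List ℕ} (h : IsRGF w) (hw : w ≠ []) : 1 ≤ nLetters w := by
  cases w with
  | nil => exact absurd rfl hw
  | cons x w => have := h.1 x (by simp); simp; omega

lemma isRGF_rgfComp {a b : List ℕ} (ha : IsRGF a) (hb : IsRGF b) : IsRGF (rgfComp a b) := by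
  rw [isRGF_iff] at *
  rw [rgfComp, rg_append]
  refine ⟨ha, ?_⟩
  simpa using rg_shift (nLetters a) b 0 hb

lemma nLetters_rgfComp (a b : List ℕ) : nLetters (rgfComp a b) = nLetters a + nLetters b := by
  rw [rgfComp, nLetters_append, max_nLetters_map_add]

/-- Concatenation of a list of words. -/
def cat (l : List (List ℕ)) : List ℕ := l.foldr rgfComp []

@[simp] lemma cat_nil : cat [] = [] := rfl
@[simp] lemma cat_cons (c : List ℕ) (l : List (List ℕ)) : cat (c :: l) = rgfComp c (cat l) := rfl

lemma rgfComp_nil (a : List ℕ) : rgfComp a [] = a := by simp [rgfComp]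
lemma nil_rgfComp (a : List ℕ) : rgfComp [] a = a := by simp [rgfComp]

lemma rgfComp_assoc (a b c : List ℕ) : rgfComp (rgfComp a b) c = rgfComp a (rgfComp b c) := by
  rw [rgfComp, nLetters_rgfComp]
  simp only [rgfComp, List.append_assoc, List.map_append, List.map_map]
  congr 3
  funext x; simp; omega

lemma cat_append (l m : List (List ℕ)) : cat (l ++ m) = rgfComp (cat l) (cat m) := by
  induction l with
  | nil => simp [nil_rgfComp]
  | cons c l ih => simp [ih, rgfComp_assoc]

lemma cat_flatten (L : List (List (List ℕ))) : cat L.flatten = cat (L.map cat) := by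
  induction L with
  | nil => simp
  | cons l L ih => simp [cat_append, ih]

lemma isRGF_cat {l : List (List ℕ)} (h : ∀ c ∈ l, IsRGF c) : IsRGF (cat l) := by
  induction l with
  | nil => exact isRGF_nil
  | cons c l ih =>
    exact isRGF_rgfComp (h c (by simp)) (ih fun d hd => h d (by simp [hd]))

/-! ### Facts on `onePatAux` -/

lemma onePatAux_mem {l : List (List ℕ)} (h : ∀ c ∈ l, IsRGF c) :
    ∀ s, ∀ x ∈ onePatAux s l, x = 1 ∨ s < x := by
  induction l with
  | nil => intro s x hx; simp [onePatAux] at hx; simp [hx]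
  | cons c l ih =>
    intro s x hx
    simp only [onePatAux, List.mem_cons, List.mem_append, List.mem_map] at hx
    rcases hx with hx | ⟨y, hy, rfl⟩ | hx
    · exact Or.inl hx
    · right; have := (h c (by simp)).1 y hy; omega
    · rcases ih (fun d hd => h d (by simp [hd])) _ x hx with h1 | h1
      · exact Or.inl h1
      · right; omega

lemma onePatAux_cons_head (s : ℕ) (l : List (List ℕ)) :
    ∃ t, onePatAux s l = 1 :: t := by
  cases l with
  | nil => exact ⟨[], rfl⟩
  | cons c l => exact ⟨_, rfl⟩

lemma onePatAux_last (l : List (List ℕ)) : ∀ s, ∃ t, onePatAux s l = t ++ [1] := by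
  induction l with
  | nil => exact fun s => ⟨[], rfl⟩
  | cons c l ih =>
    intro s
    obtain ⟨t, ht⟩ := ih (s + nLetters c)
    exact ⟨1 :: (c.map (· + s) ++ t), by simp [onePatAux, ht]⟩

lemma nLetters_onePatAux (l : List (List ℕ)) :
    ∀ s, 1 ≤ s → max s (nLetters (onePatAux s l)) = s + nLetters (cat l) := by
  induction l with
  | nil => intro s hs; simp [onePatAux]; omega
  | cons c l ih =>
    intro s hs
    have h1 := ih (s + nLetters c) (by omega)
    have h2 := max_nLetters_map_add c s
    simp only [onePatAux, nLetters_cons, nLetters_append, cat_cons, nLetters_rgfComp]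
    omega

lemma nLetters_onePat (l : List (List ℕ)) : nLetters (onePat l) = 1 + nLetters (cat l) := by
  have h := nLetters_onePatAux l 1 le_rfl
  obtain ⟨t, ht⟩ := onePatAux_cons_head 1 l
  rw [onePat]
  rw [ht] at h ⊢
  simp only [nLetters_cons] at *
  omega

lemma rg_onePatAux {l : List (List ℕ)} (h : ∀ c ∈ l, IsRGF c) :
    ∀ s, RG s (onePatAux s l) := by
  induction l with
  | nil => intro s; simp [onePatAux, RG]
  | cons c l ih =>
    intro s
    have hc : RG 0 c := (isRGF_iff c).1 (h c (by simp))
    have h1 := rg_shift s c 0 hc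
    simp only [onePatAux, RG]
    refine ⟨le_rfl, by omega, ?_⟩
    rw [rg_append]
    refine ⟨rg_mono_start _ (by omega) h1, ?_⟩
    refine rg_mono_start _ ?_ (ih (fun d hd => h d (by simp [hd])) _)
    have h2 := max_nLetters_map_add c s
    omega

lemma isRGF_onePat {l : List (List ℕ)} (h : ∀ c ∈ l, IsRGF c) : IsRGF (onePat l) := by
  rw [isRGF_iff]
  have h1 := rg_onePatAux h 1
  rw [onePat]
  obtain ⟨t, ht⟩ := onePatAux_cons_head 1 l
  rw [ht] at h1 ⊢
  simpa [RG] using h1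

lemma length_onePatAux (l : List (List ℕ)) :
    ∀ s, (onePatAux s l).length = 1 + (l.map (fun w => w.length + 1)).sum := by
  induction l with
  | nil => simp [onePatAux]
  | cons c l ih => intro s; simp [onePatAux, ih]; omega

/-! ### Pattern containment through strictly monotone relabelling -/

lemma pc_iff (w p : List ℕ) : PatContains w p ↔
    ∃ f : ℕ → ℕ, (∀ x ∈ p, ∀ y ∈ p, x < y → f x < f y) ∧ (p.map f).Sublist w := by
  constructor
  · rintro ⟨s, hs, hl, ho⟩
    have key : ∀ x ∈ p, p.idxOf x < s.length ∧ p.getD (p.idxOf x) 0 = x := by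
      intro x hx
      have := List.idxOf_lt_length_iff.2 hx
      refine ⟨by omega, ?_⟩
      rw [List.getD_eq_getElem _ _ this]
      exact List.getElem_idxOf this
    refine ⟨fun x => s.getD (p.idxOf x) 0, ?_, ?_⟩
    · intro x hx y hy hxy
      obtain ⟨h1, h2⟩ := key x hx
      obtain ⟨h3, h4⟩ := key y hy
      exact (ho _ _ h1 h3).2 (by rw [h2, h4]; exact hxy)
    · convert hs using 1
      apply List.ext_getElem
      · simp [hl]
      · intro i h1 h2
        have h5 : i < p.length := by omega
        obtain ⟨h3, h4⟩ := key p[i] (List.getElem_mem h5)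
        have e1 := ho _ _ h3 h2
        have e2 := ho _ _ h2 h3
        rw [h4, List.getD_eq_getElem p 0 h5, List.getD_eq_getElem s 0 h2] at e1 e2
        rw [List.getElem_map]
        have := e1.not.2 (lt_irrefl _)
        have := e2.not.2 (lt_irrefl _)
        omega
  · rintro ⟨f, hf, hs⟩
    refine ⟨_, hs, by simp, ?_⟩
    intro i j hi hj
    rw [List.length_map] at hi hj
    rw [List.getD_eq_getElem p 0 hi, List.getD_eq_getElem p 0 hj,
      List.getD_eq_getElem _ 0 (by simpa using hi), List.getD_eq_getElem _ 0 (by simpa using hj),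
      List.getElem_map, List.getElem_map]
    constructor
    · intro h
      by_contra h1
      rcases Nat.lt_or_ge p[j] p[i] with h2 | h2
      · have := hf _ (List.getElem_mem hj) _ (List.getElem_mem hi) h2
        omega
      · have : p[i] = p[j] := by omega
        rw [this] at h; omega
    · exact fun h => hf _ (List.getElem_mem hi) _ (List.getElem_mem hj) h

lemma pc_mono {u w p : List ℕ} (h : u.Sublist w) (hp : PatContains u p) : PatContains w p := by
  obtain ⟨s, hs, h1⟩ := hp
  exact ⟨s, hs.trans h, h1⟩

lemma pc_trans {w p q : List ℕ} (h1 : PatContains w p) (h2 : PatContains p q) :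
    PatContains w q := by
  rw [pc_iff] at *
  obtain ⟨f, hf, hs⟩ := h1
  obtain ⟨g, hg, ht⟩ := h2
  refine ⟨f ∘ g, ?_, ?_⟩
  · intro x hx y hy hxy
    exact hf _ (ht.subset (List.mem_map_of_mem hx)) _ (ht.subset (List.mem_map_of_mem hy))
      (hg x hx y hy hxy)
  · rw [← List.map_map]
    exact (ht.map f).trans hs

lemma pc_shift {w p : List ℕ} {s : ℕ} : PatContains (w.map (· + s)) p ↔ PatContains w p := by
  constructor
  · intro h
    rw [pc_iff] at *
    obtain ⟨f, hf, hs⟩ := h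
    have hge : ∀ x ∈ p, s ≤ f x := by
      intro x hx
      have := hs.subset (List.mem_map_of_mem hx)
      simp only [List.mem_map] at this
      obtain ⟨a, _, ha⟩ := this
      omega
    refine ⟨fun x => f x - s, ?_, ?_⟩
    · intro x hx y hy hxy
      have := hf x hx y hy hxy
      have := hge x hx
      show f x - s < f y - s
      omega
    · have := hs.map (· - s)
      simpa [List.map_map, Function.comp_def] using this
  · intro h
    refine pc_trans ?_ h
    rw [pc_iff]
    exact ⟨(· + s), fun x _ y _ h => by simpa using h, List.Sublist.refl _⟩

lemma pc_refl_shift (w : List ℕ) (s : ℕ) : PatContains (w.map (· + s)) w := by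
  rw [pc_iff]
  exact ⟨(· + s), fun x _ y _ h => by simpa using h, List.Sublist.refl _⟩

lemma pc_nil (w : List ℕ) : PatContains w [] := by
  rw [pc_iff]; exact ⟨id, by simp, by simp⟩

lemma nc_iff (w : List ℕ) : NonCrossing w ↔ ∀ x y, x < y → ¬ [x, y, x, y].Sublist w := by
  rw [NonCrossing, PatAvoids, pc_iff]
  constructor
  · intro h x y hxy hs
    apply h
    refine ⟨fun z => if z = 1 then x else y, ?_, by simpa using hs⟩
    intro a ha b hb hab
    simp at ha hb
    have ha : a = 1 := by omega
    have hb : b = 2 := by omega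
    subst ha hb
    simpa using hxy
  · rintro h ⟨f, hf, hs⟩
    exact h (f 1) (f 2) (hf 1 (by simp) 2 (by simp) (by omega)) (by simpa using hs)

lemma nc_of_pc {w p : List ℕ} (h : PatContains w p) (hw : NonCrossing w) : NonCrossing p :=
  fun hp => hw (pc_trans h hp)

/-- Non-crossing RGFs. -/
def NR (w : List ℕ) : Prop := IsRGF w ∧ NonCrossing w

lemma pc_rgfComp_left (a b : List ℕ) : PatContains (rgfComp a b) a := by
  have := pc_refl_shift a 0
  simp only [Nat.add_zero, List.map_id'] at this
  exact pc_mono (by simp [rgfComp]) this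

lemma pc_rgfComp_right (a b : List ℕ) : PatContains (rgfComp a b) b :=
  pc_mono (by simp [rgfComp]) (pc_refl_shift b (nLetters a))

lemma pc_cat_mem {l : List (List ℕ)} {c : List ℕ} (h : c ∈ l) : PatContains (cat l) c := by
  obtain ⟨u, v, rfl⟩ := List.append_of_mem h
  rw [cat_append, cat_cons]
  exact pc_trans (pc_rgfComp_right _ _) (pc_rgfComp_left _ _)

lemma nr_nil : NR [] := ⟨isRGF_nil, by rw [nc_iff]; simp⟩

lemma nr_rgfComp {a b : List ℕ} (ha : NR a) (hb : NR b) : NR (rgfComp a b) := by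
  refine ⟨isRGF_rgfComp ha.1 hb.1, ?_⟩
  have hb' : NonCrossing (b.map (· + nLetters a)) := fun h => hb.2 (pc_shift.1 h)
  have ha' := ha.2
  rw [nc_iff] at *
  intro x y hxy hs
  rw [rgfComp, List.sublist_append_iff] at hs
  obtain ⟨l₁, l₂, he, h1, h2⟩ := hs
  have m1 : ∀ z ∈ l₁, z ≤ nLetters a := fun z hz => le_nLetters (h1.subset hz)
  have m2 : ∀ z ∈ l₂, nLetters a < z := by
    intro z hz
    have := h2.subset hz
    simp only [List.mem_map] at this
    obtain ⟨y, hy, rfl⟩ := this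
    have := hb.1.1 y hy
    omega
  rcases l₁ with _ | ⟨p, _ | ⟨q, _ | ⟨r, _ | ⟨t, l⟩⟩⟩⟩
  · simp at he; subst he; exact hb' x y hxy h2
  · simp at he; obtain ⟨rfl, rfl⟩ := he; simp at m1 m2; omega
  · simp at he; obtain ⟨rfl, rfl, rfl⟩ := he; simp at m1 m2; omega
  · simp at he; obtain ⟨rfl, rfl, rfl, rfl⟩ := he; simp at m1 m2; omega
  · simp at he; obtain ⟨rfl, rfl, rfl, rfl, rfl, rfl⟩ := he; exact ha' _ _ hxy h1

lemma nr_cat {l : List (List ℕ)} (h : ∀ c ∈ l, NR c) : NR (cat l) := by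
  induction l with
  | nil => exact nr_nil
  | cons c l ih =>
    exact nr_rgfComp (h c (by simp)) (ih fun d hd => h d (by simp [hd]))

lemma shift_bounds {c : List ℕ} (hc : IsRGF c) (s : ℕ) :
    ∀ z ∈ c.map (· + s), s < z ∧ z ≤ s + nLetters c := by
  intro z hz
  simp only [List.mem_map] at hz
  obtain ⟨y, hy, rfl⟩ := hz
  have := hc.1 y hy
  have := le_nLetters hy
  omega

lemma nc_onePatAux {l : List (List ℕ)} (h : ∀ c ∈ l, NR c) :
    ∀ s, 1 ≤ s → NonCrossing (onePatAux s l) := by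
  induction l with
  | nil => intro s _; rw [nc_iff]; intro x y hxy hs; have := hs.length_le; simp [onePatAux] at this
  | cons c l ih =>
    intro s hs1
    have hc := h c (by simp)
    have hl : ∀ d ∈ l, NR d := fun d hd => h d (by simp [hd])
    have ih := ih hl (s + nLetters c) (by omega)
    have hc' : NonCrossing (c.map (· + s)) := fun h => hc.2 (pc_shift.1 h)
    have mR := onePatAux_mem (fun d hd => (hl d hd).1) (s + nLetters c)
    have mC := shift_bounds hc.1 s
    obtain ⟨t, ht⟩ := onePatAux_cons_head (s + nLetters c) l
    rw [nc_iff] at *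
    intro x y hxy hs
    rw [onePatAux] at hs
    have hx1 : 1 ≤ x := by
      have := hs.subset (show x ∈ [x, y, x, y] by simp)
      simp only [List.mem_cons, List.mem_append] at this
      rcases this with h | h | h
      · omega
      · have := mC x h; omega
      · rcases mR x h with h | h <;> omega
    by_cases hx : x = 1
    · subst hx
      have h3 : [y, 1, y].Sublist (c.map (· + s) ++ onePatAux (s + nLetters c) l) := by
        simpa using hs
      rw [List.sublist_append_iff] at h3
      obtain ⟨l₁, l₂, he, h1, h2⟩ := h3
      have m1 := fun z hz => mC z (h1.subset hz)
      have m2 := fun z hz => mR z (h2.subset hz)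
      rcases l₁ with _ | ⟨p, _ | ⟨q, l⟩⟩
      · simp at he; subst he
        apply ih 1 y hxy
        rw [ht] at h2 ⊢
        apply List.Sublist.cons_cons
        exact (List.cons_sublist_cons'.1 h2).resolve_right (by omega)
      · simp at he; obtain ⟨rfl, rfl⟩ := he; simp at m1 m2; omega
      · simp at he; obtain ⟨rfl, rfl, he⟩ := he; simp at m1; omega
    · have h3 : [x, y, x, y].Sublist (c.map (· + s) ++ onePatAux (s + nLetters c) l) := by
        exact (List.cons_sublist_cons'.1 hs).resolve_right (by omega)
      rw [List.sublist_append_iff] at h3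
      obtain ⟨l₁, l₂, he, h1, h2⟩ := h3
      have m1 := fun z hz => mC z (h1.subset hz)
      have m2 := fun z hz => mR z (h2.subset hz)
      rcases l₁ with _ | ⟨p, _ | ⟨q, _ | ⟨r, _ | ⟨t, l⟩⟩⟩⟩
      · simp at he; subst he; exact ih x y hxy h2
      · simp at he; obtain ⟨rfl, rfl⟩ := he; simp at m1 m2; omega
      · simp at he; obtain ⟨rfl, rfl, rfl⟩ := he; simp at m1 m2; omega
      · simp at he; obtain ⟨rfl, rfl, rfl, rfl⟩ := he; simp at m1 m2; omega
      · simp at he; obtain ⟨rfl, rfl, rfl, rfl, rfl, rfl⟩ := he; exact hc' _ _ hxy h1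

lemma nr_onePat {l : List (List ℕ)} (h : ∀ c ∈ l, NR c) : NR (onePat l) :=
  ⟨isRGF_onePat fun c hc => (h c hc).1, nc_onePatAux h 1 le_rfl⟩

/-! ### Decomposition -/

lemma append_one_inj {p p' q q' : List ℕ} (hp : 1 ∉ p) (hp' : 1 ∉ p')
    (h : p ++ 1 :: q = p' ++ 1 :: q') : p = p' ∧ q = q' := by
  induction p generalizing p' with
  | nil =>
    cases p' with
    | nil => simpa using h
    | cons y p' => simp at h hp'; omega
  | cons x p ih =>
    cases p' with
    | nil => simp at h hp; omega
    | cons y p' =>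
      simp at h hp hp'
      obtain ⟨h1, h2⟩ := ih hp.2 hp'.2 h.2
      simp [h.1, h1, h2]

lemma map_add_inj {u v : List ℕ} {s : ℕ} (h : u.map (· + s) = v.map (· + s)) : u = v :=
  List.map_injective_iff.2 (add_left_injective s) h

lemma onePatAux_inj {l l' : List (List ℕ)} (hl : ∀ c ∈ l, IsRGF c) (hl' : ∀ c ∈ l', IsRGF c)
    {v v' : List ℕ} : ∀ {s}, 1 ≤ s → (hv : 1 ∉ v) → (hv' : 1 ∉ v') →
    onePatAux s l ++ v = onePatAux s l' ++ v' → l = l' ∧ v = v' := by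
  induction l generalizing l' with
  | nil =>
    intro s hs hv hv' h
    cases l' with
    | nil => simpa [onePatAux] using h
    | cons c l' =>
      obtain ⟨t, ht⟩ := onePatAux_cons_head (s + nLetters c) l'
      simp [onePatAux, ht] at h
      simp [h] at hv
  | cons c l ih =>
    intro s hs hv hv' h
    cases l' with
    | nil =>
      obtain ⟨t, ht⟩ := onePatAux_cons_head (s + nLetters c) l
      simp [onePatAux, ht] at h
      simp [← h] at hv'
    | cons c' l' =>
      obtain ⟨t, ht⟩ := onePatAux_cons_head (s + nLetters c) l
      obtain ⟨t', ht'⟩ := onePatAux_cons_head (s + nLetters c') l'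
      have n1 : 1 ∉ c.map (· + s) := fun h1 => by
        have := shift_bounds (hl c (by simp)) s 1 h1; omega
      have n2 : 1 ∉ c'.map (· + s) := fun h1 => by
        have := shift_bounds (hl' c' (by simp)) s 1 h1; omega
      simp only [onePatAux, ht, ht', List.cons_append, List.append_assoc, List.cons.injEq,
        true_and] at h
      obtain ⟨h1, h2⟩ := append_one_inj n1 n2 h
      have h1 := map_add_inj h1
      subst h1
      have := @ih l' (fun d hd => hl d (by simp [hd])) (fun d hd => hl' d (by simp [hd]))
        (s + nLetters c) (by omega) hv hv' (by rw [ht, ht']; simp [h2])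
      simp [this]

lemma onePat_comp_inj {l l' : List (List ℕ)} (hl : ∀ c ∈ l, IsRGF c) (hl' : ∀ c ∈ l', IsRGF c)
    {v v' : List ℕ} (hv : IsRGF v) (hv' : IsRGF v')
    (h : rgfComp (onePat l) v = rgfComp (onePat l') v') : l = l' ∧ v = v' := by
  have key : ∀ {l : List (List ℕ)} {v : List ℕ}, IsRGF v →
      1 ∉ v.map (· + nLetters (onePat l)) := by
    intro l v hv h1
    have := shift_bounds hv _ 1 h1
    have := nLetters_onePat l
    omega
  obtain ⟨h1, h2⟩ := onePatAux_inj hl hl' le_rfl (key hv) (key hv') h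
  subst h1
  exact ⟨rfl, map_add_inj h2⟩

lemma exists_unshift {b : List ℕ} {s : ℕ} (h : ∀ x ∈ b, s < x) (hb : RG s b) :
    ∃ b', IsRGF b' ∧ b = b'.map (· + s) := by
  have e : b = (b.map (· - s)).map (· + s) := by
    rw [List.map_map]
    conv_lhs => rw [← List.map_id b]
    apply List.map_congr_left
    intro x hx
    have := h x hx
    simp; omega
  refine ⟨b.map (· - s), ?_, e⟩
  rw [isRGF_iff]
  apply rg_unshift s
  · intro x hx
    simp only [List.mem_map] at hx
    obtain ⟨y, hy, rfl⟩ := hx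
    have := h y hy
    omega
  · rw [← e]; simpa using hb

lemma decomp_aux : ∀ (n : ℕ) (u : List ℕ) (s : ℕ), u.length ≤ n → 1 ≤ s → RG s u →
    NonCrossing (1 :: u) → (∀ x ∈ u, x = 1 ∨ s < x) →
    ∃ (l : List (List ℕ)) (v : List ℕ), (∀ c ∈ l, NR c) ∧ NR v ∧
      1 :: u = onePatAux s l ++ v.map (· + (s + nLetters (cat l))) := by
  intro n
  induction n with
  | zero =>
    intro u s hu hs _ _ _
    have : u = [] := List.length_eq_zero_iff.1 (by omega)
    subst this
    exact ⟨[], [], by simp, nr_nil, by simp [onePatAux]⟩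
  | succ n ih =>
    intro u s hu hs hrg hnc hmem
    by_cases h1 : 1 ∈ u
    · obtain ⟨b, u', rfl, hb⟩ : ∃ b u', u = b ++ 1 :: u' ∧ 1 ∉ b := by
        obtain ⟨b, u', h, h'⟩ := List.eq_append_cons_of_mem h1
        exact ⟨b, u', h, h'⟩
      rw [rg_append] at hrg
      obtain ⟨c, hc, rfl⟩ := exists_unshift (s := s) (b := b) (by
        intro x hx
        rcases hmem x (by simp [hx]) with rfl | h
        · exact absurd hx hb
        · exact h) hrg.1
      have hcn : NonCrossing c := by
        refine nc_of_pc ?_ hnc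
        refine pc_mono ?_ (pc_refl_shift c s)
        exact ((List.prefix_append _ _).sublist).trans (List.sublist_cons_self _ _)
      rw [max_nLetters_map_add] at hrg
      have hrg2 := hrg.2.2.2
      obtain ⟨l, v, hl, hv, he⟩ := ih u' (s + nLetters c) (by simp at hu; omega) (by omega)
        (by rwa [max_eq_left (by omega)] at hrg2)
        (nc_of_pc (pc_mono (u := 1 :: u')
          ((List.sublist_append_right _ _).trans (List.sublist_cons_self _ _))
          (by simpa using pc_refl_shift (1 :: u') 0)) hnc) (by
          intro x hx
          rcases hmem x (by simp [hx]) with h | h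
          · exact Or.inl h
          · right
            by_contra h2
            rw [nc_iff] at hnc
            apply hnc 1 x (by omega)
            apply List.Sublist.cons_cons
            have hxc : x - s ∈ c := rg_full c 0 ((isRGF_iff c).1 hc) _ (by omega) (by omega)
            have hxm : x ∈ c.map (· + s) := List.mem_map.2 ⟨x - s, hxc, by omega⟩
            have e : [x, 1, x] = [x] ++ [1, x] := rfl
            rw [e]
            exact (List.singleton_sublist.2 hxm).append
              (List.Sublist.cons_cons _ (List.singleton_sublist.2 hx)))
      refine ⟨c :: l, v, ?_, hv, ?_⟩
      · intro d hd
        rcases List.mem_cons.1 hd with rfl | hd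
        · exact ⟨hc, hcn⟩
        · exact hl d hd
      · rw [onePatAux, he]
        simp [nLetters_rgfComp, Nat.add_assoc]
    · obtain ⟨v, hv, rfl⟩ := exists_unshift (s := s) (b := u) (by
        intro x hx
        rcases hmem x hx with rfl | h
        · exact absurd hx h1
        · exact h) hrg
      refine ⟨[], v, by simp, ⟨hv, ?_⟩, by simp [onePatAux]⟩
      exact nc_of_pc (pc_mono (List.sublist_cons_self _ _) (pc_refl_shift v s)) hnc

lemma nr_decomp {w : List ℕ} (hw : NR w) (hne : w ≠ []) :
    ∃ (l : List (List ℕ)) (v : List ℕ), (∀ c ∈ l, NR c) ∧ NR v ∧ w = rgfComp (onePat l) v := by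
  cases w with
  | nil => exact absurd rfl hne
  | cons x u =>
    have h := (isRGF_iff _).1 hw.1
    have hx : x = 1 := by have := h.1; have := h.2.1; omega
    subst hx
    obtain ⟨l, v, hl, hv, he⟩ := decomp_aux u.length u 1 le_rfl le_rfl
      (by simpa using h.2.2) hw.2 (by
        intro x hx
        have := rg_pos h x (by simp [hx])
        omega)
    refine ⟨l, v, hl, hv, ?_⟩
    rw [rgfComp, nLetters_onePat, he]
    rfl

/-- Connected non-crossing RGFs. -/
def Good (c : List ℕ) : Prop := ∃ l : List (List ℕ), (∀ w ∈ l, NR w) ∧ c = onePat l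

lemma Good.nr {c : List ℕ} (h : Good c) : NR c := by
  obtain ⟨l, hl, rfl⟩ := h
  exact nr_onePat hl

lemma onePat_ne_nil (l : List (List ℕ)) : onePat l ≠ [] := by
  obtain ⟨t, ht⟩ := onePatAux_cons_head 1 l
  rw [onePat, ht]; simp

lemma Good.ne_nil {c : List ℕ} (h : Good c) : c ≠ [] := by
  obtain ⟨l, hl, rfl⟩ := h
  exact onePat_ne_nil l

lemma good_comp_inj {c c' v v' : List ℕ} (hc : Good c) (hc' : Good c') (hv : NR v) (hv' : NR v')
    (h : rgfComp c v = rgfComp c' v') : c = c' ∧ v = v' := by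
  obtain ⟨l, hl, rfl⟩ := hc
  obtain ⟨l', hl', rfl⟩ := hc'
  obtain ⟨rfl, h2⟩ := onePat_comp_inj (fun c hc => (hl c hc).1) (fun c hc => (hl' c hc).1)
    hv.1 hv'.1 h
  exact ⟨rfl, h2⟩

lemma rgfComp_eq_nil {a b : List ℕ} (h : rgfComp a b = []) : a = [] := by
  simp [rgfComp] at h; exact h.1

lemma cat_inj {l l' : List (List ℕ)} (h : ∀ c ∈ l, Good c) (h' : ∀ c ∈ l', Good c)
    (he : cat l = cat l') : l = l' := by
  induction l generalizing l' with
  | nil =>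
    cases l' with
    | nil => rfl
    | cons c l' => exact absurd (rgfComp_eq_nil he.symm) (h' c (by simp)).ne_nil
  | cons c l ih =>
    cases l' with
    | nil => exact absurd (rgfComp_eq_nil he) (h c (by simp)).ne_nil
    | cons c' l' =>
      have h1 : ∀ c ∈ l, Good c := fun d hd => h d (by simp [hd])
      have h2 : ∀ c ∈ l', Good c := fun d hd => h' d (by simp [hd])
      obtain ⟨rfl, h3⟩ := good_comp_inj (h c (by simp)) (h' c' (by simp))
        (nr_cat fun d hd => (h1 d hd).nr) (nr_cat fun d hd => (h2 d hd).nr) he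
      rw [ih h1 h2 h3]

lemma exists_cat : ∀ (n : ℕ) (w : List ℕ), w.length ≤ n → NR w →
    ∃ l : List (List ℕ), (∀ c ∈ l, Good c) ∧ w = cat l := by
  intro n
  induction n with
  | zero =>
    intro w hw _
    exact ⟨[], by simp, List.length_eq_zero_iff.1 (by omega)⟩
  | succ n ih =>
    intro w hw hn
    by_cases hne : w = []
    · exact ⟨[], by simp, hne⟩
    · obtain ⟨l, v, hl, hv, he⟩ := nr_decomp hn hne
      have hlen : v.length ≤ n := by
        have h1 : w.length = (onePat l).length + v.length := by rw [he]; simp [rgfComp]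
        have h2 := length_onePatAux l 1
        rw [onePat] at h1
        omega
      obtain ⟨m, hm, rfl⟩ := ih v hlen hv
      refine ⟨onePat l :: m, ?_, he⟩
      intro c hc
      rcases List.mem_cons.1 hc with rfl | hc
      · exact ⟨l, hl, rfl⟩
      · exact hm c hc

lemma Good.connected {c : List ℕ} (h : Good c) : Connected c := by
  refine ⟨h.ne_nil, ?_⟩
  rintro ⟨a, b, ha, hb, hane, hbne, he⟩
  obtain ⟨l, hl, rfl⟩ := h
  obtain ⟨t, ht⟩ := onePatAux_last l 1
  rw [onePat, ht, rgfComp] at he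
  obtain ⟨b', x, rfl⟩ : ∃ b' x, b = b' ++ [x] :=
    ⟨_, _, (List.dropLast_append_getLast hbne).symm⟩
  rw [List.map_append, ← List.append_assoc] at he
  have h1 := (List.append_inj' he rfl).2
  simp at h1
  have := hb.1 x (by simp)
  have := isRGF_nLetters_pos ha hane
  omega

lemma good_iff {c : List ℕ} : Good c ↔ NR c ∧ Connected c := by
  constructor
  · exact fun h => ⟨h.nr, h.connected⟩
  · rintro ⟨h1, h2⟩
    obtain ⟨l, hl, rfl⟩ := exists_cat _ c le_rfl h1
    cases l with
    | nil => exact absurd rfl h2.1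
    | cons d l =>
      cases l with
      | nil => simpa [rgfComp_nil] using hl d (by simp)
      | cons e l =>
        exfalso
        apply h2.2
        have h3 := hl d (by simp)
        have h4 : ∀ c ∈ e :: l, Good c := fun c hc => hl c (List.mem_cons_of_mem _ hc)
        refine ⟨d, cat (e :: l), h3.nr.1, (nr_cat fun c hc => (h4 c hc).nr).1, h3.ne_nil, ?_, rfl⟩
        intro h5
        exact (hl e (by simp)).ne_nil (rgfComp_eq_nil h5)

lemma hasComponents_iff {w : List ℕ} (hw : NR w) (p : ℕ) :
    HasComponents w p ↔ ∃ l : List (List ℕ), l.length = p ∧ (∀ c ∈ l, Good c) ∧ w = cat l := by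
  constructor
  · rintro ⟨l, h1, h2, h3⟩
    refine ⟨l, h1, ?_, h3⟩
    intro c hc
    have : PatContains w c := by rw [h3]; exact pc_cat_mem hc
    exact good_iff.2 ⟨⟨(h2 c hc).1, nc_of_pc this hw.2⟩, (h2 c hc).2⟩
  · rintro ⟨l, h1, h2, h3⟩
    exact ⟨l, h1, fun c hc => ⟨(h2 c hc).nr.1, (h2 c hc).connected⟩, h3⟩

/-! ### Containment of `onePat` patterns -/

lemma onePatAux_one_min {S : List (List ℕ)} (hS : ∀ c ∈ S, IsRGF c) {s : ℕ} (hs : 1 ≤ s) :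
    ∀ x ∈ onePatAux s S, 1 ≤ x := by
  intro x hx
  rcases onePatAux_mem hS s x hx with h | h <;> omega

lemma pc_rgfComp_onePat {a b : List ℕ} (hb : IsRGF b) {S : List (List ℕ)}
    (h : PatContains (rgfComp a b) (onePat S)) :
    PatContains a (onePat S) ∨ PatContains b (onePat S) := by
  rw [pc_iff] at h
  obtain ⟨f, hf, hs⟩ := h
  rw [rgfComp, List.sublist_append_iff] at hs
  obtain ⟨l₁, l₂, he, h1, h2⟩ := hs
  by_cases e1 : l₁ = []
  · right
    subst e1
    rw [← pc_shift (s := nLetters a), pc_iff]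
    exact ⟨f, hf, by rw [he]; simpa using h2⟩
  by_cases e2 : l₂ = []
  · left
    subst e2
    rw [pc_iff]
    exact ⟨f, hf, by rw [he]; simpa using h1⟩
  exfalso
  obtain ⟨x, r, rfl⟩ := List.exists_cons_of_ne_nil e1
  obtain ⟨r', y, rfl⟩ : ∃ r' y, l₂ = r' ++ [y] :=
    ⟨_, _, (List.dropLast_append_getLast e2).symm⟩
  obtain ⟨t, ht⟩ := onePatAux_cons_head 1 S
  obtain ⟨t', ht'⟩ := onePatAux_last S 1
  have e3 : x = f 1 := by
    rw [onePat, ht] at he; simp at he; exact he.1.symm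
  have e4 : y = f 1 := by
    rw [onePat, ht', List.map_append, ← List.append_assoc] at he
    have := (List.append_inj' he rfl).2
    simpa using this.symm
  have := le_nLetters (h1.subset (show x ∈ x :: r by simp))
  have := shift_bounds hb (nLetters a) y (h2.subset (by simp))
  omega

lemma pc_cat_onePat {l : List (List ℕ)} (hl : ∀ c ∈ l, IsRGF c) {S : List (List ℕ)}
    (h : PatContains (cat l) (onePat S)) : ∃ c ∈ l, PatContains c (onePat S) := by
  induction l with
  | nil =>
    exfalso
    obtain ⟨s, hs, h1, _⟩ := h
    simp at hs; subst hs
    exact onePat_ne_nil S (List.length_eq_zero_iff.1 h1.symm)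
  | cons c l ih =>
    have hl' : ∀ c ∈ l, IsRGF c := fun d hd => hl d (by simp [hd])
    rcases pc_rgfComp_onePat (isRGF_cat hl') h with h | h
    · exact ⟨c, by simp, h⟩
    · obtain ⟨d, hd, h⟩ := ih hl' h
      exact ⟨d, by simp [hd], h⟩

/-- `ws` can be cut (up to a remainder) into nonempty chunks containing the successive
patterns of the first argument. -/
def Ch : List (List ℕ) → List (List ℕ) → Prop
  | [], _ => True
  | c :: S, ws => ∃ u v, ws = u ++ v ∧ u ≠ [] ∧ PatContains (cat u) c ∧ Ch S v

lemma split_aux {ws : List (List ℕ)} (hws : ∀ w ∈ ws, IsRGF w) {d Q : List ℕ} :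
    ∀ {s}, 1 ≤ s → 1 ∉ d → (d ++ 1 :: Q).Sublist (onePatAux s ws).tail →
    ∃ u v, ws = u ++ v ∧ u ≠ [] ∧ d.Sublist ((cat u).map (· + s)) ∧
      (1 :: Q).Sublist (onePatAux (s + nLetters (cat u)) v) := by
  induction ws generalizing d with
  | nil => intro s _ _ h; simp [onePatAux] at h
  | cons w ws ih =>
    intro s hs hd h
    simp only [onePatAux, List.tail_cons] at h
    rw [List.sublist_append_iff] at h
    obtain ⟨l₁, l₂, he, h1, h2⟩ := h
    have m1 := fun z hz => shift_bounds (hws w (by simp)) s z (h1.subset hz)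
    obtain ⟨d₂, rfl, rfl⟩ : ∃ d₂, d = l₁ ++ d₂ ∧ l₂ = d₂ ++ 1 :: Q := by
      rcases List.append_eq_append_iff.1 he with ⟨a, h3, h4⟩ | ⟨a, h3, h4⟩
      · cases a with
        | nil => exact ⟨[], by simpa using h3.symm, by simpa using h4.symm⟩
        | cons x a =>
          exfalso
          simp at h4
          have := m1 1 (by rw [h3, ← h4.1]; simp)
          omega
      · exact ⟨a, h3, h4⟩
    by_cases hd2 : d₂ = []
    · subst hd2
      refine ⟨[w], ws, rfl, by simp, ?_, ?_⟩
      · simpa [rgfComp_nil] using h1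
      · simpa [rgfComp_nil] using h2
    · obtain ⟨t, ht⟩ := onePatAux_cons_head (s + nLetters w) ws
      have h5 : (d₂ ++ 1 :: Q).Sublist (onePatAux (s + nLetters w) ws).tail := by
        obtain ⟨x, d₃, rfl⟩ := List.exists_cons_of_ne_nil hd2
        rw [ht] at h2 ⊢
        rw [List.cons_append] at h2
        rcases List.cons_sublist_cons'.1 h2 with h | h
        · exact h
        · exfalso; apply hd; rw [h.1]; simp
      obtain ⟨u, v, rfl, hu, h6, h7⟩ := ih (fun d hd => hws d (by simp [hd]))
        (by omega) (fun h => hd (by simp [h])) h5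
      refine ⟨w :: u, v, rfl, by simp, ?_, ?_⟩
      · rw [cat_cons, rgfComp, List.map_append]
        apply h1.append
        rw [List.map_map]
        convert h6 using 2
        funext x; simp; omega
      · rw [cat_cons, nLetters_rgfComp, ← Nat.add_assoc]; exact h7

lemma ch_of_sublist {S : List (List ℕ)} (hS : ∀ c ∈ S, IsRGF c) {f : ℕ → ℕ} :
    ∀ {ws : List (List ℕ)} {s s₀ : ℕ}, (∀ w ∈ ws, IsRGF w) → 1 ≤ s → 1 ≤ s₀ → f 1 = 1 →
    (∀ x ∈ onePatAux s₀ S, ∀ y ∈ onePatAux s₀ S, x < y → f x < f y) →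
    ((onePatAux s₀ S).map f).Sublist (onePatAux s ws) → Ch S ws := by
  induction S with
  | nil => intros; trivial
  | cons c S ih =>
    intro ws s s₀ hws hs hs0 hf1 hf h
    have hc : IsRGF c := hS c (by simp)
    have hS' : ∀ c ∈ S, IsRGF c := fun d hd => hS d (by simp [hd])
    obtain ⟨t, ht⟩ := onePatAux_cons_head (s₀ + nLetters c) S
    have hd : 1 ∉ (c.map (· + s₀)).map f := by
      intro h1
      obtain ⟨x, hx, hx1⟩ := List.mem_map.1 h1
      have hb := shift_bounds hc s₀ x hx
      have hx' : x ∈ onePatAux s₀ (c :: S) := by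
        rw [onePatAux]
        exact List.mem_cons_of_mem _ (List.mem_append_left _ hx)
      have := hf 1 (by simp [onePatAux]) x hx' (by omega)
      omega
    have h2 : ((c.map (· + s₀)).map f ++ 1 :: t.map f).Sublist (onePatAux s ws).tail := by
      obtain ⟨t', ht'⟩ := onePatAux_cons_head s ws
      rw [ht'] at h ⊢
      rw [onePatAux, ht, List.map_cons, hf1, List.map_append, List.map_cons, hf1] at h
      simpa using h
    obtain ⟨u, v, rfl, hu, h3, h4⟩ := split_aux hws hs hd h2
    refine ⟨u, v, rfl, hu, ?_, ?_⟩
    · rw [← pc_shift (s := s), pc_iff]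
      refine ⟨fun x => f (x + s₀), ?_, ?_⟩
      · intro x hx y hy hxy
        apply hf _ _ _ _ (by omega)
        · rw [onePatAux]
          simp only [List.mem_cons, List.mem_append, List.mem_map]
          exact Or.inr (Or.inl ⟨x, hx, rfl⟩)
        · rw [onePatAux]
          simp only [List.mem_cons, List.mem_append, List.mem_map]
          exact Or.inr (Or.inl ⟨y, hy, rfl⟩)
      · simpa [List.map_map, Function.comp_def] using h3
    · apply ih hS' (s := s + nLetters (cat u)) (s₀ := s₀ + nLetters c)
        (fun w hw => hws w (by simp [hw])) (by omega) (by omega) hf1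
      · intro x hx y hy
        exact hf x (by rw [onePatAux]; simp [hx]) y (by rw [onePatAux]; simp [hy])
      · rw [ht, List.map_cons, hf1]; exact h4

lemma pc_inner {P : List ℕ} {x : ℕ} (hx : 2 ≤ x) (hP : ∃ t, P = x :: t) (hP' : ∃ t, P = t ++ [x])
    (hmin : ∀ y ∈ P, x ≤ y) {ws : List (List ℕ)} : ∀ {s}, (∀ w ∈ ws, IsRGF w) → 1 ≤ s →
    P.Sublist (onePatAux s ws) → ∃ w ∈ ws, ∃ k, P.Sublist (w.map (· + k)) := by
  induction ws with
  | nil =>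
    intro s _ _ h
    exfalso
    obtain ⟨t, rfl⟩ := hP
    have := h.subset (show x ∈ x :: t by simp)
    simp [onePatAux] at this
    omega
  | cons w ws ih =>
    intro s hws hs h
    have hws' : ∀ w ∈ ws, IsRGF w := fun d hd => hws d (by simp [hd])
    rw [onePatAux] at h
    have h1 : P.Sublist (w.map (· + s) ++ onePatAux (s + nLetters w) ws) := by
      obtain ⟨t, rfl⟩ := hP
      exact (List.cons_sublist_cons'.1 h).resolve_right (by omega)
    rw [List.sublist_append_iff] at h1
    obtain ⟨l₁, l₂, he, h1, h2⟩ := h1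
    by_cases e1 : l₁ = []
    · subst e1
      obtain ⟨d, hd, k, hk⟩ := ih hws' (show 1 ≤ s + nLetters w by omega)
        (by rw [he]; simpa using h2)
      exact ⟨d, by simp [hd], k, hk⟩
    by_cases e2 : l₂ = []
    · subst e2
      exact ⟨w, by simp, s, by rw [he]; simpa using h1⟩
    exfalso
    obtain ⟨y, r, rfl⟩ := List.exists_cons_of_ne_nil e1
    obtain ⟨r', z, rfl⟩ : ∃ r' y, l₂ = r' ++ [y] :=
      ⟨_, _, (List.dropLast_append_getLast e2).symm⟩
    obtain ⟨t, ht⟩ := hP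
    obtain ⟨t', ht'⟩ := hP'
    have e3 : y = x := by
      rw [ht] at he; simp at he; exact he.1.symm
    have e4 : z = x := by
      rw [ht', ← List.append_assoc] at he
      have := (List.append_inj' he rfl).2
      simpa using this.symm
    have := shift_bounds (hws w (by simp)) s y (h1.subset (by simp))
    rcases onePatAux_mem hws' _ z (h2.subset (by simp)) with h | h <;> omega

lemma onePat_contains_imp {S ws : List (List ℕ)} (hS : ∀ c ∈ S, IsRGF c)
    (hws : ∀ w ∈ ws, IsRGF w) (h : PatContains (onePat ws) (onePat S)) :
    (∃ w ∈ ws, PatContains w (onePat S)) ∨ Ch S ws := by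
  rw [pc_iff] at h
  obtain ⟨f, hf, hs⟩ := h
  obtain ⟨t, ht⟩ := onePatAux_cons_head 1 S
  obtain ⟨t', ht'⟩ := onePatAux_last S 1
  have h1 : f 1 ∈ onePatAux 1 ws := hs.subset (by rw [onePat, ht]; simp)
  have h1' := onePatAux_one_min hws le_rfl _ h1
  by_cases hf1 : f 1 = 1
  · exact Or.inr (ch_of_sublist hS hws le_rfl le_rfl hf1 hf hs)
  · left
    obtain ⟨w, hw, k, hk⟩ := pc_inner (P := (onePat S).map f) (x := f 1) (by omega)
      ⟨t.map f, by rw [onePat, ht]; simp⟩ ⟨t'.map f, by rw [onePat, ht']; simp⟩ (by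
        intro y hy
        obtain ⟨z, hz, rfl⟩ := List.mem_map.1 hy
        have := onePatAux_one_min hS le_rfl z hz
        rcases Nat.eq_or_lt_of_le this with h | h
        · rw [h]
        · exact (hf 1 (by rw [onePat, ht]; simp) z hz h).le) hws le_rfl hs
    refine ⟨w, hw, ?_⟩
    rw [← pc_shift (s := k), pc_iff]
    exact ⟨f, hf, hk⟩

lemma onePatAux_cat_sublist {u v : List (List ℕ)} (hu : u ≠ []) : ∀ {s},
    (1 :: ((cat u).map (· + s) ++ onePatAux (s + nLetters (cat u)) v)).Sublist
      (onePatAux s (u ++ v)) := by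
  induction u with
  | nil => exact absurd rfl hu
  | cons w u ih =>
    intro s
    by_cases hu' : u = []
    · subst hu'; simp [onePatAux, rgfComp_nil]
    · have h := @ih hu' (s + nLetters w)
      rw [List.cons_append, onePatAux, cat_cons, nLetters_rgfComp, rgfComp, List.map_append,
        List.append_assoc, ← Nat.add_assoc]
      apply List.Sublist.cons_cons
      apply (List.Sublist.refl _).append
      refine List.Sublist.trans ?_ ((List.sublist_cons_self _ _).trans h)
      rw [List.map_map]
      apply List.Sublist.append _ (List.Sublist.refl _)
      refine Eq.subst (motive := fun z => List.Sublist _ z) ?_ (List.Sublist.refl _)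
      apply List.map_congr_left
      intro x _
      simp; omega

lemma one_sublist_onePatAux (s : ℕ) (ws : List (List ℕ)) : [1].Sublist (onePatAux s ws) := by
  obtain ⟨t, ht⟩ := onePatAux_cons_head s ws
  rw [ht]; simp

lemma ch_contains_aux {S : List (List ℕ)} (hS : ∀ c ∈ S, IsRGF c) :
    ∀ {ws : List (List ℕ)} {s s₀ : ℕ}, (∀ w ∈ ws, IsRGF w) → 1 ≤ s → 1 ≤ s₀ → Ch S ws →
    ∃ f : ℕ → ℕ, f 1 = 1 ∧ (∀ x ∈ onePatAux s₀ S, s₀ < x → s < f x) ∧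
      (∀ x ∈ onePatAux s₀ S, ∀ y ∈ onePatAux s₀ S, x < y → f x < f y) ∧
      ((onePatAux s₀ S).map f).Sublist (onePatAux s ws) := by
  induction S with
  | nil =>
    intro ws s s₀ _ hs hs0 _
    refine ⟨fun x => x, rfl, ?_, ?_, ?_⟩
    · simp [onePatAux]; omega
    · simp [onePatAux]
    · simpa [onePatAux] using one_sublist_onePatAux s ws
  | cons c S ih =>
    intro ws s s₀ hws hs hs0 h
    obtain ⟨u, v, rfl, hu, hcu, hch⟩ := h
    have hc : IsRGF c := hS c (by simp)
    have hS' : ∀ c ∈ S, IsRGF c := fun d hd => hS d (by simp [hd])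
    obtain ⟨h, h1, h2, h3, h4⟩ := ih hS' (ws := v) (s := s + nLetters (cat u))
      (s₀ := s₀ + nLetters c) (fun w hw => hws w (by simp [hw])) (by omega) (by omega) hch
    obtain ⟨g, hg, hgs⟩ := (pc_iff _ _).1 hcu
    have hcat : IsRGF (cat u) := isRGF_cat fun w hw => hws w (by simp [hw])
    have mR := onePatAux_mem hS' (s₀ + nLetters c)
    let f : ℕ → ℕ := fun z => if z = 1 then 1 else if z ≤ s₀ + nLetters c then g (z - s₀) + s else h z
    have f1 : f 1 = 1 := by simp [f]
    have fc : ∀ y ∈ c, f (y + s₀) = g y + s := by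
      intro y hy
      have := hc.1 y hy
      have := le_nLetters hy
      simp only [f]
      rw [if_neg (by omega), if_pos (by omega)]
      simp
    have fr : ∀ z ∈ onePatAux (s₀ + nLetters c) S, f z = h z := by
      intro z hz
      rcases mR z hz with rfl | h5
      · rw [f1, h1]
      · simp only [f]
        rw [if_neg (by omega), if_neg (by omega)]
    have gb : ∀ y ∈ c, 1 ≤ g y ∧ g y ≤ nLetters (cat u) := by
      intro y hy
      have := hgs.subset (List.mem_map_of_mem hy)
      exact ⟨hcat.1 _ this, le_nLetters this⟩
    have mem : ∀ x ∈ onePatAux s₀ (c :: S), (x = 1 ∧ f x = 1) ∨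
        (∃ y ∈ c, x = y + s₀ ∧ f x = g y + s) ∨
        (x ∈ onePatAux (s₀ + nLetters c) S ∧ s₀ + nLetters c < x ∧ f x = h x) := by
      intro x hx
      rw [onePatAux] at hx
      simp only [List.mem_cons, List.mem_append, List.mem_map] at hx
      rcases hx with rfl | ⟨y, hy, rfl⟩ | hx
      · exact Or.inl ⟨rfl, f1⟩
      · exact Or.inr (Or.inl ⟨y, hy, rfl, fc y hy⟩)
      · rcases mR x hx with rfl | h5
        · exact Or.inl ⟨rfl, f1⟩
        · exact Or.inr (Or.inr ⟨hx, h5, fr x hx⟩)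
    refine ⟨f, f1, ?_, ?_, ?_⟩
    · intro x hx hlt
      rcases mem x hx with ⟨rfl, _⟩ | ⟨y, hy, rfl, e⟩ | ⟨hx, h5, e⟩
      · omega
      · have := gb y hy; omega
      · have := h2 x hx h5; omega
    · intro x hx y hy hxy
      rcases mem x hx with ⟨rfl, e1⟩ | ⟨x', hx', rfl, e1⟩ | ⟨hx', h5, e1⟩ <;>
      rcases mem y hy with ⟨rfl, e2⟩ | ⟨y', hy', rfl, e2⟩ | ⟨hy', h6, e2⟩
      · omega
      · have := gb y' hy'; omega
      · have := h2 y hy' h6; omega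
      · omega
      · have := hg x' hx' y' hy' (by omega); omega
      · have := gb x' hx'; have := h2 y hy' h6; omega
      · omega
      · have := le_nLetters hy'; omega
      · have := h3 x hx' y hy' hxy; omega
    · refine List.Sublist.trans ?_ (onePatAux_cat_sublist hu)
      rw [onePatAux, List.map_cons, f1, List.map_append]
      apply List.Sublist.cons_cons
      apply List.Sublist.append
      · have e : (c.map (· + s₀)).map f = (c.map g).map (· + s) := by
          rw [List.map_map, List.map_map]
          apply List.map_congr_left
          intro y hy
          exact fc y hy
        rw [e]
        exact hgs.map _
      · have e : (onePatAux (s₀ + nLetters c) S).map f = (onePatAux (s₀ + nLetters c) S).map h :=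
          List.map_congr_left fr
        rw [e]
        exact h4

lemma pc_onePat_of_ch {S ws : List (List ℕ)} (hS : ∀ c ∈ S, IsRGF c)
    (hws : ∀ w ∈ ws, IsRGF w) (h : Ch S ws) : PatContains (onePat ws) (onePat S) := by
  obtain ⟨f, _, _, h1, h2⟩ := ch_contains_aux hS (s := 1) (s₀ := 1) hws le_rfl le_rfl h
  rw [pc_iff]
  exact ⟨f, h1, h2⟩

lemma pc_onePatAux_mem {ws : List (List ℕ)} {w : List ℕ} (h : w ∈ ws) :
    ∀ s, PatContains (onePatAux s ws) w := by
  induction ws with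
  | nil => simp at h
  | cons v ws ih =>
    intro s
    rw [onePatAux]
    rcases List.mem_cons.1 h with rfl | h
    · refine pc_mono ?_ (pc_refl_shift w s)
      exact (List.sublist_append_left _ _).trans (List.sublist_cons_self _ _)
    · exact pc_mono ((List.sublist_append_right _ _).trans (List.sublist_cons_self _ _)) (ih h _)

lemma onePat_avoids_iff {S ws : List (List ℕ)} (hS : ∀ c ∈ S, IsRGF c)
    (hws : ∀ w ∈ ws, IsRGF w) : PatAvoids (onePat ws) (onePat S) ↔
    (∀ w ∈ ws, PatAvoids w (onePat S)) ∧ ¬ Ch S ws := by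
  constructor
  · intro h
    exact ⟨fun w hw h1 => h (pc_trans (pc_onePatAux_mem hw 1) h1),
      fun h1 => h (pc_onePat_of_ch hS hws h1)⟩
  · rintro ⟨h1, h2⟩ h3
    rcases onePat_contains_imp hS hws h3 with ⟨w, hw, h⟩ | h
    · exact h1 w hw h
    · exact h2 h

lemma comp_avoids_iff {a b : List ℕ} (hb : IsRGF b) {S : List (List ℕ)} :
    PatAvoids (rgfComp a b) (onePat S) ↔ PatAvoids a (onePat S) ∧ PatAvoids b (onePat S) := by
  constructor
  · intro h
    exact ⟨fun h1 => h (pc_trans (pc_rgfComp_left _ _) h1),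
      fun h1 => h (pc_trans (pc_rgfComp_right _ _) h1)⟩
  · rintro ⟨h1, h2⟩ h3
    rcases pc_rgfComp_onePat hb h3 with h | h
    · exact h1 h
    · exact h2 h

lemma avoids_nil_onePat (S : List (List ℕ)) : PatAvoids [] (onePat S) := by
  rintro ⟨s, hs, h1, _⟩
  simp at hs; subst hs
  exact onePat_ne_nil S (List.length_eq_zero_iff.1 h1.symm)

/-! ### Counting series -/

section Series
open PowerSeries

noncomputable def gf {α : Type} (wt : α → ℕ) (X : Set α) : PowerSeries ℤ :=
  PowerSeries.mk fun n => (({x | x ∈ X ∧ wt x = n} : Set α).ncard : ℤ)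

def FF {α : Type} (wt : α → ℕ) (X : Set α) : Prop := ∀ n, ({x | x ∈ X ∧ wt x = n} : Set α).Finite

lemma FF.mono {α : Type} {wt : α → ℕ} {X Y : Set α} (h : FF wt Y) (hXY : X ⊆ Y) : FF wt X :=
  fun n => (h n).subset fun _ hx => ⟨hXY hx.1, hx.2⟩

lemma gf_union {α : Type} {wt : α → ℕ} {X Y : Set α} (hX : FF wt X) (hY : FF wt Y)
    (hd : Disjoint X Y) : gf wt (X ∪ Y) = gf wt X + gf wt Y := by
  ext n
  simp only [gf, coeff_mk, map_add]
  rw [← Nat.cast_add, ← Set.ncard_union_eq _ (hX n) (hY n)]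
  · congr 2
    ext x
    simp only [Set.mem_union, Set.mem_setOf_eq]
    tauto
  · exact hd.mono (fun _ h => h.1) (fun _ h => h.1)

lemma gf_image {α β : Type} {wt : α → ℕ} {wt' : β → ℕ} {X : Set α} {f : α → β} (k : ℕ)
    (hf : Set.InjOn f X) (hw : ∀ x ∈ X, wt' (f x) = wt x + k) :
    gf wt' (f '' X) = PowerSeries.X ^ k * gf wt X := by
  ext n
  rw [coeff_X_pow_mul']
  simp only [gf, coeff_mk]
  split_ifs with h
  · congr 1
    have e : ({y | y ∈ f '' X ∧ wt' y = n} : Set β) = f '' {x | x ∈ X ∧ wt x = n - k} := by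
      ext y
      constructor
      · rintro ⟨⟨x, hx, rfl⟩, h2⟩
        rw [hw x hx] at h2
        exact ⟨x, ⟨hx, by omega⟩, rfl⟩
      · rintro ⟨x, ⟨hx, h2⟩, rfl⟩
        exact ⟨⟨x, hx, rfl⟩, by rw [hw x hx]; omega⟩
    rw [e]
    exact Set.ncard_image_of_injOn (hf.mono fun _ h => h.1)
  · have e : ({y | y ∈ f '' X ∧ wt' y = n} : Set β) = ∅ := by
      ext y
      simp only [Set.mem_setOf_eq, Set.mem_empty_iff_false, iff_false]
      rintro ⟨⟨x, hx, rfl⟩, h2⟩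
      rw [hw x hx] at h2
      omega
    rw [e]; simp

lemma gf_image2 {α β γ : Type} {wa : α → ℕ} {wb : β → ℕ} {wc : γ → ℕ} {X : Set α} {Y : Set β}
    {φ : α → β → γ} (hX : FF wa X) (hY : FF wb Y)
    (hinj : ∀ x ∈ X, ∀ y ∈ Y, ∀ x' ∈ X, ∀ y' ∈ Y, φ x y = φ x' y' → x = x' ∧ y = y')
    (hw : ∀ x ∈ X, ∀ y ∈ Y, wc (φ x y) = wa x + wb y) :
    gf wc (Set.image2 φ X Y) = gf wa X * gf wb Y := by
  classical
  ext n
  rw [coeff_mul]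
  simp only [gf, coeff_mk]
  have e : ({z | z ∈ Set.image2 φ X Y ∧ wc z = n} : Set γ) =
      ↑((Finset.HasAntidiagonal.antidiagonal n).biUnion fun p =>
        (((hX p.1).toFinset ×ˢ (hY p.2).toFinset).image (Function.uncurry φ))) := by
    ext z
    simp only [Set.mem_setOf_eq, Finset.coe_biUnion, Finset.mem_coe, Finset.HasAntidiagonal.mem_antidiagonal,
      Finset.coe_image, Set.mem_iUnion, Set.mem_image, Finset.mem_product, Set.Finite.mem_toFinset]
    constructor
    · rintro ⟨⟨x, hx, y, hy, rfl⟩, h⟩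
      exact ⟨(wa x, wb y), by rw [← h, hw x hx y hy], (x, y), ⟨⟨hx, rfl⟩, ⟨hy, rfl⟩⟩, rfl⟩
    · rintro ⟨⟨i, j⟩, hij, ⟨x, y⟩, ⟨⟨hx, h1⟩, ⟨hy, h2⟩⟩, rfl⟩
      exact ⟨⟨x, hx, y, hy, rfl⟩, by
        have := hw x hx y hy
        simp only [Function.uncurry] at *
        omega⟩
  rw [e, Set.ncard_coe_finset, Finset.card_biUnion]
  · push_cast
    apply Finset.sum_congr rfl
    rintro ⟨i, j⟩ _
    rw [Finset.card_image_of_injOn, Finset.card_product, Set.ncard_eq_toFinset_card _ (hX i),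
      Set.ncard_eq_toFinset_card _ (hY j)]
    · push_cast; rfl
    · rintro ⟨x, y⟩ h ⟨x', y'⟩ h' he
      simp only [Finset.coe_product, Set.Finite.coe_toFinset, Set.mem_prod, Set.mem_setOf_eq] at h h'
      obtain ⟨h1, h2⟩ := hinj x h.1.1 y h.2.1 x' h'.1.1 y' h'.2.1 he
      rw [h1, h2]
  · rintro ⟨i, j⟩ _ ⟨i', j'⟩ _ hne
    rw [Function.onFun, Finset.disjoint_left]
    intro z hz hz'
    simp only [Finset.mem_image, Finset.mem_product, Set.Finite.mem_toFinset,
      Set.mem_setOf_eq] at hz hz'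
    obtain ⟨⟨x, y⟩, ⟨⟨h1, h2⟩, ⟨h3, h4⟩⟩, rfl⟩ := hz
    obtain ⟨⟨x', y'⟩, ⟨⟨h1', h2'⟩, ⟨h3', h4'⟩⟩, he⟩ := hz'
    obtain ⟨rfl, rfl⟩ := hinj x' h1' y' h3' x h1 y h3 he
    apply hne
    simp only at h2 h4 h2' h4'
    rw [← h2, ← h4, ← h2', ← h4']

lemma gf_empty {α : Type} (wt : α → ℕ) : gf wt (∅ : Set α) = 0 := by
  ext n; simp [gf]

lemma gf_singleton {α : Type} {wt : α → ℕ} {a : α} (h : wt a = 0) : gf wt {a} = 1 := by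
  ext n
  simp only [gf, coeff_mk, coeff_one, Set.mem_singleton_iff]
  split_ifs with hn
  · have : ({x | x = a ∧ wt x = n} : Set α) = {a} := by
      ext x; simp only [Set.mem_setOf_eq, Set.mem_singleton_iff]
      constructor
      · exact fun h => h.1
      · rintro rfl; exact ⟨rfl, by omega⟩
    rw [this]; simp
  · have : ({x | x = a ∧ wt x = n} : Set α) = ∅ := by
      ext x; simp only [Set.mem_setOf_eq, Set.mem_empty_iff_false, iff_false]
      rintro ⟨rfl, h2⟩; omega
    rw [this]; simp

/-- Weight of a list of words. -/
def wtL (ws : List (List ℕ)) : ℕ := (ws.map (fun w => w.length + 1)).sum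

lemma ff_NR : FF List.length {w | NR w} := by
  intro n
  have h : ({l : List (Fin (n + 1)) | l.length = n}).Finite := List.finite_length_eq _ _
  refine (h.image (fun l => l.map Fin.val)).subset ?_
  rintro w ⟨hw, hl⟩
  have hb : ∀ x ∈ w, x < n + 1 := by
    intro x hx
    have h1 := le_nLetters hx
    have h2 := rg_le_length w 0 ((isRGF_iff w).1 hw.1)
    omega
  refine ⟨w.map (fun x => Fin.ofNat (n + 1) x), by simpa using hl, ?_⟩
  simp only [List.map_map]
  conv_rhs => rw [← List.map_id w]
  apply List.map_congr_left
  intro x hx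
  simp [Nat.mod_eq_of_lt (hb x hx)]

lemma length_onePat (ws : List (List ℕ)) : (onePat ws).length = wtL ws + 1 := by
  rw [onePat, length_onePatAux, wtL]; omega

lemma onePat_injOn : Set.InjOn onePat {ws | ∀ w ∈ ws, NR w} := by
  intro l hl l' hl' h
  refine (onePat_comp_inj (fun c hc => (hl c hc).1) (fun c hc => (hl' c hc).1)
    isRGF_nil isRGF_nil ?_).1
  rw [rgfComp_nil, rgfComp_nil, h]

lemma ff_lists : FF wtL {ws | ∀ w ∈ ws, NR w} := by
  intro n
  refine Set.Finite.of_finite_image (f := onePat) ((ff_NR (n + 1)).subset ?_)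
    (onePat_injOn.mono fun _ h => h.1)
  rintro _ ⟨ws, ⟨h1, h2⟩, rfl⟩
  exact ⟨nr_onePat h1, by rw [length_onePat, h2]⟩

def XS (A : Set (List ℕ)) (S : List (List ℕ)) : Set (List (List ℕ)) :=
  {ws | (∀ w ∈ ws, w ∈ A) ∧ ¬ Ch S ws}

def YS (c : List ℕ) : Set (List (List ℕ)) :=
  {ws | (∀ w ∈ ws, NR w) ∧ (ws = [] ∨ PatAvoids (cat ws) c)}

def MS (A : Set (List ℕ)) (c : List ℕ) : Set (List (List ℕ)) :=
  {ws | (∀ w ∈ ws, w ∈ A) ∧ PatContains (cat ws) c ∧ ∃ u w, ws = u ++ [w] ∧ u ∈ YS c}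

lemma pc_cat_append_left {u v : List (List ℕ)} {c : List ℕ} (h : PatContains (cat u) c) :
    PatContains (cat (u ++ v)) c := by
  rw [cat_append]; exact pc_trans (pc_rgfComp_left _ _) h

lemma pc_cat_append_right {u v : List (List ℕ)} {c : List ℕ} (h : PatContains (cat v) c) :
    PatContains (cat (u ++ v)) c := by
  rw [cat_append]; exact pc_trans (pc_rgfComp_right _ _) h

lemma nil_mem_YS (c : List ℕ) : [] ∈ YS c := ⟨by simp, Or.inl rfl⟩

lemma YS_prefix {u v : List (List ℕ)} {c : List ℕ} (h : u ++ v ∈ YS c) : u ∈ YS c := by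
  refine ⟨fun w hw => h.1 w (by simp [hw]), ?_⟩
  rcases h.2 with h1 | h1
  · left; exact (List.append_eq_nil_iff.1 h1).1
  · right; exact fun h2 => h1 (pc_cat_append_left h2)

lemma YS_not_pc {u : List (List ℕ)} {c : List ℕ} (h : u ∈ YS c) (hu : u ≠ []) :
    ¬ PatContains (cat u) c := h.2.resolve_left hu

lemma YS_mem {A : Set (List ℕ)} {c : List ℕ} (hc : ∀ w, NR w → PatAvoids w c → w ∈ A)
    {u : List (List ℕ)} (h : u ∈ YS c) : ∀ w ∈ u, w ∈ A := by
  intro w hw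
  refine hc w (h.1 w hw) fun h1 => ?_
  exact YS_not_pc h (List.ne_nil_of_mem hw) (pc_trans (pc_cat_mem hw) h1)

lemma wtL_append (u v : List (List ℕ)) : wtL (u ++ v) = wtL u + wtL v := by simp [wtL]

lemma ff_of_A {A : Set (List ℕ)} (hA : ∀ w ∈ A, NR w) {X : Set (List (List ℕ))}
    (h : ∀ ws ∈ X, ∀ w ∈ ws, w ∈ A) : FF wtL X :=
  ff_lists.mono fun ws hws w hw => hA w (h ws hws w hw)

lemma ff_YS (c : List ℕ) : FF wtL (YS c) := ff_lists.mono fun _ h => h.1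

lemma gf_MS {A : Set (List ℕ)} (hA : ∀ w ∈ A, NR w) {c : List ℕ}
    (hc : ∀ w, NR w → PatAvoids w c → w ∈ A) :
    gf wtL (MS A c) = gf wtL (YS c) * (PowerSeries.X * gf List.length A) - gf wtL (YS c) + 1 := by
  have e1 : Set.image2 (fun u w => u ++ [w]) (YS c) A = MS A c ∪ (YS c \ {[]}) := by
    ext ws
    constructor
    · rintro ⟨u, hu, w, hw, rfl⟩
      have hmem : ∀ x ∈ u ++ [w], x ∈ A := by
        intro x hx
        rcases List.mem_append.1 hx with hx | hx
        · exact YS_mem hc hu x hx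
        · simp at hx; rw [hx]; exact hw
      by_cases h : PatContains (cat (u ++ [w])) c
      · exact Or.inl ⟨hmem, h, u, w, rfl, hu⟩
      · exact Or.inr ⟨⟨fun x hx => hA x (hmem x hx), Or.inr h⟩, by simp⟩
    · rintro (⟨h1, h2, u, w, rfl, hu⟩ | ⟨h1, h2⟩)
      · exact ⟨u, hu, w, h1 w (by simp), rfl⟩
      · have h2 : ws ≠ [] := by simpa using h2
        obtain ⟨u, w, rfl⟩ : ∃ u w, ws = u ++ [w] :=
          ⟨_, _, (List.dropLast_append_getLast h2).symm⟩
        exact ⟨u, YS_prefix h1, w, YS_mem hc h1 w (by simp), rfl⟩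
  have e2 : YS c = (YS c \ {[]}) ∪ {[]} := by
    ext ws
    by_cases h : ws = []
    · subst h; simp [nil_mem_YS]
    · simp [h]
  have g0 : gf (fun w : List ℕ => w.length + 1) A = PowerSeries.X * gf List.length A := by
    have := gf_image (wt := List.length) (wt' := fun w : List ℕ => w.length + 1) (X := A)
      (f := id) 1 (Set.injOn_id _) (fun _ _ => rfl)
    simpa using this
  have g1 : gf wtL (YS c) = gf wtL (YS c \ {[]}) + 1 := by
    conv_lhs => rw [e2]
    rw [gf_union ((ff_YS c).mono Set.diff_subset)
      ((ff_YS c).mono (by simpa using nil_mem_YS c)) (by simp), gf_singleton (by simp [wtL])]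
  have g2 : gf wtL (Set.image2 (fun u w => u ++ [w]) (YS c) A) =
      gf wtL (YS c) * (PowerSeries.X * gf List.length A) := by
    rw [← g0]
    apply gf_image2 (ff_YS c)
    · intro n
      refine (ff_NR (n - 1)).subset ?_
      rintro w ⟨h1, h2⟩
      have h2 : w.length + 1 = n := h2
      have h3 : w.length = n - 1 := by omega
      exact ⟨hA w h1, h3⟩
    · intro x _ y _ x' _ y' _ h
      obtain ⟨h1, h2⟩ := List.append_inj' h rfl
      exact ⟨h1, by simpa using h2⟩
    · intro x _ y _; rw [wtL_append]; simp [wtL]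
  have g3 := gf_union (X := MS A c) (Y := YS c \ {[]}) (ff_of_A hA fun _ h => h.1)
    ((ff_YS c).mono Set.diff_subset) (by
      rw [Set.disjoint_left]
      rintro ws h1 ⟨h2, h3⟩
      exact YS_not_pc h2 (by simpa using h3) h1.2.1)
  rw [← e1, g2] at g3
  rw [g3]
  linear_combination g1

lemma ch_append {S : List (List ℕ)} {v : List (List ℕ)} (t : List (List ℕ)) (h : Ch S v) :
    Ch S (t ++ v) := by
  cases S with
  | nil => trivial
  | cons c S =>
    obtain ⟨u, v', rfl, hu, h1, h2⟩ := h
    exact ⟨t ++ u, v', by simp, by simp [hu], pc_cat_append_right h1, h2⟩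

/-- A chunk minimal for `c` is a prefix of any nonempty prefix containing `c`. -/
lemma MS_prefix {A : Set (List ℕ)} {c : List ℕ} {u v u' v' : List (List ℕ)} (hu : u ∈ MS A c)
    (hu' : u' ≠ []) (hc : PatContains (cat u') c) (h : u ++ v = u' ++ v') :
    ∃ t, u' = u ++ t ∧ v = t ++ v' := by
  rcases List.append_eq_append_iff.1 h with ⟨t, h1, h2⟩ | ⟨t, h1, h2⟩
  · exact ⟨t, h1, h2⟩
  · by_cases ht : t = []
    · subst ht
      exact ⟨[], by simpa using h1.symm, by simpa using h2.symm⟩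
    · exfalso
      obtain ⟨t', z, rfl⟩ : ∃ t' z, t = t' ++ [z] :=
        ⟨_, _, (List.dropLast_append_getLast ht).symm⟩
      obtain ⟨_, _, p, w, h3, hp⟩ := hu
      rw [h3, ← List.append_assoc] at h1
      have h4 := (List.append_inj' h1 rfl).1
      subst h4
      exact YS_not_pc (YS_prefix hp) hu' hc

lemma exists_MS {A : Set (List ℕ)} (hA : ∀ w ∈ A, NR w) {c : List ℕ} {ws : List (List ℕ)}
    (h : ∀ w ∈ ws, w ∈ A) : ws ∈ YS c ∨ ∃ u v, ws = u ++ v ∧ u ∈ MS A c := by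
  induction ws using List.reverseRecOn with
  | nil => exact Or.inl (nil_mem_YS c)
  | append_singleton ws w ih =>
    rcases ih (fun x hx => h x (by simp [hx])) with h1 | ⟨u, v, rfl, h1⟩
    · by_cases h2 : PatContains (cat (ws ++ [w])) c
      · exact Or.inr ⟨ws ++ [w], [], by simp, h, h2, ws, w, rfl, h1⟩
      · exact Or.inl ⟨fun x hx => hA x (h x hx), Or.inr h2⟩
    · exact Or.inr ⟨u, v ++ [w], by simp, h1⟩

lemma gf_XS_cons {A : Set (List ℕ)} (hA : ∀ w ∈ A, NR w) {c : List ℕ} {S : List (List ℕ)}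
    (hc : ∀ w, NR w → PatAvoids w c → w ∈ A) :
    gf wtL (XS A (c :: S)) = gf wtL (YS c) +
      (gf wtL (YS c) * (PowerSeries.X * gf List.length A) - gf wtL (YS c) + 1) *
        gf wtL (XS A S) := by
  have hMne : ∀ u ∈ MS A c, u ≠ [] := by
    rintro u ⟨_, _, p, w, rfl, _⟩; simp
  have e : XS A (c :: S) = YS c ∪ Set.image2 (· ++ ·) (MS A c) (XS A S) := by
    ext ws
    constructor
    · rintro ⟨h1, h2⟩
      rcases exists_MS hA (c := c) h1 with h | ⟨u, v, rfl, hu⟩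
      · exact Or.inl h
      · refine Or.inr ⟨u, hu, v, ⟨fun w hw => h1 w (by simp [hw]), fun h3 => h2 ?_⟩, rfl⟩
        exact ⟨u, v, rfl, hMne u hu, hu.2.1, h3⟩
    · rintro (h | ⟨u, hu, v, hv, rfl⟩)
      · refine ⟨YS_mem hc h, ?_⟩
        rintro ⟨u, v, rfl, h1, h2, _⟩
        exact YS_not_pc h (by simp [h1]) (pc_cat_append_left h2)
      · refine ⟨?_, ?_⟩
        · intro w hw
          rcases List.mem_append.1 hw with hw | hw
          · exact hu.1 w hw
          · exact hv.1 w hw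
        · rintro ⟨u', v', h0, h1, h2, h3⟩
          obtain ⟨t, rfl, rfl⟩ := MS_prefix hu h1 h2 h0
          exact hv.2 (ch_append t h3)
  have fM : FF wtL (MS A c) := ff_of_A hA fun _ h => h.1
  have fX : FF wtL (XS A S) := ff_of_A hA fun _ h => h.1
  rw [e, gf_union (ff_YS c), gf_image2 fM fX, gf_MS hA hc]
  · intro x hx y _ x' hx' y' _ h
    obtain ⟨t, h1, h2⟩ := MS_prefix hx (hMne x' hx') hx'.2.1 h
    obtain ⟨t', h3, h4⟩ := MS_prefix hx' (hMne x hx) hx.2.1 h.symm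
    have : t = [] := by
      have l1 := congrArg List.length h1
      have l3 := congrArg List.length h3
      rw [List.length_append] at l1 l3
      exact List.length_eq_zero_iff.1 (by omega)
    subst this
    exact ⟨by simpa using h1.symm, by simpa using h2⟩
  · intro x _ y _; exact wtL_append x y
  · apply ff_of_A hA
    rintro _ ⟨u, hu, v, hv, rfl⟩ w hw
    rcases List.mem_append.1 hw with hw | hw
    · exact hu.1 w hw
    · exact hv.1 w hw
  · rw [Set.disjoint_left]
    rintro _ h ⟨u, hu, v, hv, rfl⟩
    exact YS_not_pc h (by simp [hMne u hu]) (pc_cat_append_left hu.2.1)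

lemma gf_XS_nil (A : Set (List ℕ)) : gf wtL (XS A []) = 0 := by
  have : XS A [] = ∅ := by
    ext ws; simp [XS, Ch]
  rw [this, gf_empty]

/-- Non-crossing RGFs avoiding `onePat S`. -/
def AV (S : List (List ℕ)) : Set (List ℕ) := {w | NR w ∧ PatAvoids w (onePat S)}

/-- Connected ones. -/
def DV (S : List (List ℕ)) : Set (List ℕ) := {w | Good w ∧ PatAvoids w (onePat S)}

/-- Those with `p` components. -/
def AP (S : List (List ℕ)) (p : ℕ) : Set (List ℕ) :=
  {w | NR w ∧ PatAvoids w (onePat S) ∧ HasComponents w p}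

lemma gf_DV {S : List (List ℕ)} (hS : ∀ c ∈ S, IsRGF c) :
    gf List.length (DV S) = PowerSeries.X * gf wtL (XS (AV S) S) := by
  have e : DV S = onePat '' XS (AV S) S := by
    ext w
    constructor
    · rintro ⟨⟨ws, h1, rfl⟩, h2⟩
      rw [onePat_avoids_iff hS fun w hw => (h1 w hw).1] at h2
      exact ⟨ws, ⟨fun w hw => ⟨h1 w hw, h2.1 w hw⟩, h2.2⟩, rfl⟩
    · rintro ⟨ws, ⟨h1, h2⟩, rfl⟩
      refine ⟨⟨ws, fun w hw => (h1 w hw).1, rfl⟩, ?_⟩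
      rw [onePat_avoids_iff hS fun w hw => (h1 w hw).1.1]
      exact ⟨fun w hw => (h1 w hw).2, h2⟩
  rw [e, gf_image (wt := wtL) 1 _ (fun ws _ => length_onePat ws), pow_one]
  exact onePat_injOn.mono fun ws h w hw => (h.1 w hw).1

lemma ff_DV (S : List (List ℕ)) : FF List.length (DV S) := ff_NR.mono fun _ h => h.1.nr
lemma ff_AV (S : List (List ℕ)) : FF List.length (AV S) := ff_NR.mono fun _ h => h.1
lemma ff_AP (S : List (List ℕ)) (p : ℕ) : FF List.length (AP S p) := ff_NR.mono fun _ h => h.1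

lemma gf_comp {S : List (List ℕ)} {B : Set (List ℕ)} (hB : ∀ w ∈ B, NR w) :
    gf List.length (Set.image2 rgfComp (DV S) B) = gf List.length (DV S) * gf List.length B := by
  apply gf_image2 (ff_DV S) (ff_NR.mono hB)
  · intro x hx y hy x' hx' y' hy' h
    exact good_comp_inj hx.1 hx'.1 (hB y hy) (hB y' hy') h
  · intro x _ y _; simp [rgfComp]

lemma gf_AV (S : List (List ℕ)) :
    gf List.length (AV S) = 1 + gf List.length (DV S) * gf List.length (AV S) := by
  have e : AV S = {[]} ∪ Set.image2 rgfComp (DV S) (AV S) := by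
    ext w
    constructor
    · rintro ⟨h1, h2⟩
      by_cases hw : w = []
      · exact Or.inl hw
      · obtain ⟨l, v, hl, hv, rfl⟩ := nr_decomp h1 hw
        rw [comp_avoids_iff hv.1] at h2
        exact Or.inr ⟨_, ⟨⟨l, hl, rfl⟩, h2.1⟩, v, ⟨hv, h2.2⟩, rfl⟩
    · rintro (h | ⟨c, hc, v, hv, rfl⟩)
      · rw [Set.mem_singleton_iff] at h; subst h
        exact ⟨nr_nil, avoids_nil_onePat S⟩
      · exact ⟨nr_rgfComp hc.1.nr hv.1, (comp_avoids_iff hv.1.1).2 ⟨hc.2, hv.2⟩⟩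
  have f2 : FF List.length (Set.image2 rgfComp (DV S) (AV S)) :=
    (ff_AV S).mono (by conv_rhs => rw [e]
                       exact Set.subset_union_right)
  have f1 : FF List.length ({[]} : Set (List ℕ)) :=
    (ff_AV S).mono (by conv_rhs => rw [e]
                       exact Set.subset_union_left)
  conv_lhs => rw [e]
  rw [gf_union f1 f2, gf_singleton (wt := List.length) (a := ([] : List ℕ)) rfl, gf_comp fun w h => h.1]
  rw [Set.disjoint_left]
  rintro w h ⟨c, hc, v, hv, he⟩
  rw [Set.mem_singleton_iff] at h; subst h
  exact hc.1.ne_nil (rgfComp_eq_nil he)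

lemma gf_AP (S : List (List ℕ)) (p : ℕ) :
    gf List.length (AP S p) = gf List.length (DV S) ^ p := by
  induction p with
  | zero =>
    have e : AP S 0 = {[]} := by
      ext w
      constructor
      · rintro ⟨_, _, l, h1, _, h3⟩
        have := List.length_eq_zero_iff.1 h1
        subst this
        exact h3
      · intro h
        rw [Set.mem_singleton_iff] at h; subst h
        exact ⟨nr_nil, avoids_nil_onePat S, [], rfl, by simp, rfl⟩
    rw [e, gf_singleton (wt := List.length) (a := ([] : List ℕ)) rfl, pow_zero]
  | succ p ih =>
    have e : AP S (p + 1) = Set.image2 rgfComp (DV S) (AP S p) := by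
      ext w
      constructor
      · rintro ⟨h1, h2, h3⟩
        obtain ⟨l, hl, hg, rfl⟩ := (hasComponents_iff h1 _).1 h3
        cases l with
        | nil => simp at hl
        | cons c l =>
          have hg' : ∀ c ∈ l, Good c := fun d hd => hg d (by simp [hd])
          have hn := nr_cat fun d hd => (hg' d hd).nr
          rw [cat_cons, comp_avoids_iff hn.1] at h2
          refine ⟨c, ⟨hg c (by simp), h2.1⟩, cat l, ⟨hn, h2.2, ?_⟩, rfl⟩
          exact (hasComponents_iff hn _).2 ⟨l, by simpa using hl, hg', rfl⟩
      · rintro ⟨c, hc, v, hv, rfl⟩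
        obtain ⟨l, hl, hg, rfl⟩ := (hasComponents_iff hv.1 _).1 hv.2.2
        have hn := nr_rgfComp hc.1.nr hv.1
        refine ⟨hn, (comp_avoids_iff hv.1.1).2 ⟨hc.2, hv.2.1⟩, ?_⟩
        refine (hasComponents_iff hn _).2 ⟨c :: l, by simp [hl], ?_, rfl⟩
        intro d hd
        rcases List.mem_cons.1 hd with rfl | hd
        · exact hc.1
        · exact hg d hd
    rw [e, gf_comp fun w h => h.1, ih, pow_succ']

lemma dvd_XS {A A' : Set (List ℕ)} (hA : ∀ w ∈ A, NR w) (hA' : ∀ w ∈ A', NR w)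
    {N : ℕ} (hN : (PowerSeries.X : PowerSeries ℤ) ^ N ∣ gf List.length A - gf List.length A')
    {S S' : List (List ℕ)} (h : List.Forall₂ (fun c c' => gf wtL (YS c) = gf wtL (YS c')) S S')
    (hS : ∀ c ∈ S, ∀ w, NR w → PatAvoids w c → w ∈ A)
    (hS' : ∀ c ∈ S', ∀ w, NR w → PatAvoids w c → w ∈ A') :
    (PowerSeries.X : PowerSeries ℤ) ^ N ∣ gf wtL (XS A S) - gf wtL (XS A' S') := by
  induction h with
  | nil => rw [gf_XS_nil, gf_XS_nil]; simp
  | @cons c c' S S' h _ ih =>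
    have ih := ih (fun d hd => hS d (by simp [hd])) (fun d hd => hS' d (by simp [hd]))
    rw [gf_XS_cons hA (hS c (by simp)), gf_XS_cons hA' (hS' c' (by simp)), h]
    obtain ⟨p, hp⟩ := hN
    obtain ⟨q, hq⟩ := ih
    refine ⟨gf wtL (YS c') * PowerSeries.X * p * gf wtL (XS A S) +
      (gf wtL (YS c') * (PowerSeries.X * gf List.length A') - gf wtL (YS c') + 1) * q, ?_⟩
    linear_combination gf wtL (YS c') * PowerSeries.X * gf wtL (XS A S) * hp +
      (gf wtL (YS c') * (PowerSeries.X * gf List.length A') - gf wtL (YS c') + 1) * hq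

lemma ps_eq_of_forall_dvd {f g : PowerSeries ℤ}
    (h : ∀ N, (PowerSeries.X : PowerSeries ℤ) ^ N ∣ f - g) : f = g := by
  ext n
  have := (X_pow_dvd_iff.1 (h (n + 1))) n (by omega)
  rw [map_sub] at this
  omega

lemma AV_of_avoids {S : List (List ℕ)} {c : List ℕ} (hc : c ∈ S) (w : List ℕ) (hw : NR w)
    (h : PatAvoids w c) : w ∈ AV S :=
  ⟨hw, fun h1 => h (pc_trans h1 (pc_onePatAux_mem hc 1))⟩

lemma gf_DV_eq {S S' : List (List ℕ)} (hS : ∀ c ∈ S, IsRGF c) (hS' : ∀ c ∈ S', IsRGF c)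
    (h : List.Forall₂ (fun c c' => gf wtL (YS c) = gf wtL (YS c')) S S') :
    gf List.length (DV S) = gf List.length (DV S') := by
  have step : ∀ N, (PowerSeries.X : PowerSeries ℤ) ^ N ∣
      gf List.length (AV S) - gf List.length (AV S') →
      (PowerSeries.X : PowerSeries ℤ) ^ (N + 1) ∣
        gf List.length (DV S) - gf List.length (DV S') := by
    intro N hN
    have := dvd_XS (fun w h => h.1) (fun w h => h.1) hN h
      (fun c hc w => AV_of_avoids hc w) (fun c hc w => AV_of_avoids hc w)
    rw [gf_DV hS, gf_DV hS', ← mul_sub, pow_succ']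
    exact mul_dvd_mul_left _ this
  have key : ∀ N, (PowerSeries.X : PowerSeries ℤ) ^ N ∣
      gf List.length (AV S) - gf List.length (AV S') := by
    intro N
    induction N with
    | zero => simp
    | succ N ih =>
      obtain ⟨q, hq⟩ := step N ih
      have h1 := gf_AV S
      have h2 := gf_AV S'
      refine ⟨gf List.length (AV S) * gf List.length (AV S') * q, ?_⟩
      linear_combination gf List.length (AV S) * gf List.length (AV S') * hq +
        gf List.length (AV S') * h1 - gf List.length (AV S) * h2
  refine ps_eq_of_forall_dvd fun N => ?_
  exact (pow_dvd_pow _ (Nat.le_succ N)).trans (step N (key N))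

lemma ncCount_eq (n p : ℕ) (S : List (List ℕ)) :
    (ncCount n p (onePat S) : ℤ) = coeff n (gf List.length (AP S p)) := by
  simp only [gf, coeff_mk, ncCount]
  congr 2
  ext w
  simp only [AP, NR, Set.mem_setOf_eq]
  tauto

lemma ccEquiv_of_forall₂ {S S' : List (List ℕ)} (hS : ∀ c ∈ S, IsRGF c)
    (hS' : ∀ c ∈ S', IsRGF c)
    (h : List.Forall₂ (fun c c' => gf wtL (YS c) = gf wtL (YS c')) S S') :
    ccEquiv (onePat S) (onePat S') := by
  intro n p
  have : (ncCount n p (onePat S) : ℤ) = ncCount n p (onePat S') := by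
    rw [ncCount_eq, ncCount_eq, gf_AP, gf_AP, gf_DV_eq hS hS' h]
  exact_mod_cast this

/-! ### The series of `YS c` depends only on the cc-class of `c` -/

open Classical in
noncomputable def comps (w : List ℕ) : List (List ℕ) :=
  if h : ∃ l : List (List ℕ), (∀ c ∈ l, Good c) ∧ w = cat l then h.choose else []

lemma comps_spec {w : List ℕ} (hw : NR w) : (∀ c ∈ comps w, Good c) ∧ cat (comps w) = w := by
  have h := exists_cat _ w le_rfl hw
  rw [comps, dif_pos h]
  exact ⟨h.choose_spec.1, h.choose_spec.2.symm⟩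

lemma comps_cat {l : List (List ℕ)} (hl : ∀ c ∈ l, Good c) : comps (cat l) = l := by
  have h := comps_spec (nr_cat fun c hc => (hl c hc).nr)
  exact cat_inj h.1 hl h.2

lemma hasComponents_comps {w : List ℕ} (hw : NR w) (p : ℕ) :
    HasComponents w p ↔ (comps w).length = p := by
  rw [hasComponents_iff hw]
  constructor
  · rintro ⟨l, h1, h2, rfl⟩
    rw [comps_cat h2, h1]
  · intro h
    exact ⟨comps w, h, (comps_spec hw).1, (comps_spec hw).2.symm⟩

lemma wtL_eq (ws : List (List ℕ)) : wtL ws = (cat ws).length + ws.length := by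
  induction ws with
  | nil => rfl
  | cons w ws ih =>
    have : wtL (w :: ws) = w.length + 1 + wtL ws := by simp [wtL]
    rw [this, ih, cat_cons, rgfComp]
    simp
    omega

lemma splitLengths_flatten {α : Type} (L : List (List α)) :
    (L.map List.length).splitLengths L.flatten = L := by
  induction L with
  | nil => simp
  | cons l L ih => simp [ih]

/-- Words avoiding `a`. -/
def WA (a : List ℕ) : Type := {w : List ℕ // NR w ∧ PatAvoids w a}

noncomputable def keyW {a : List ℕ} (w : WA a) : ℕ × ℕ := (w.1.length, (comps w.1).length)

def ZS (a : List ℕ) (n : ℕ) : Set (WA a × List ℕ) :=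
  {q | q.2 ≠ [] ∧ q.2.sum = (keyW q.1).2 ∧ (keyW q.1).1 + q.2.length = n}

lemma exists_equiv {a a' : List ℕ} (h : ccEquiv a a') :
    ∃ e : WA a ≃ WA a', ∀ w, keyW (e w) = keyW w := by
  have card : ∀ (b : List ℕ) (k : ℕ × ℕ), Nat.card {w : WA b // keyW w = k} = ncCount k.1 k.2 b := by
    intro b k
    rw [ncCount, ← Nat.card_coe_set_eq]
    refine Nat.card_congr ⟨fun w => ⟨w.1.1, w.1.2.1.1, w.1.2.1.2, congrArg Prod.fst w.2, w.1.2.2, ?_⟩,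
      fun w => ⟨⟨w.1, ⟨w.2.1, w.2.2.1⟩, w.2.2.2.2.1⟩, ?_⟩, fun _ => rfl, fun _ => rfl⟩
    · exact (hasComponents_comps w.1.2.1 _).2 (congrArg Prod.snd w.2)
    · have h1 := (hasComponents_comps ⟨w.2.1, w.2.2.1⟩ k.2).1 w.2.2.2.2.2
      have h2 := w.2.2.2.1
      exact Prod.ext h2 h1
  have fin : ∀ (b : List ℕ) (k : ℕ × ℕ), Finite {w : WA b // keyW w = k} := by
    intro b k
    have := (ff_NR k.1).to_subtype
    refine Finite.of_injective
      (fun w : {w : WA b // keyW w = k} =>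
        (⟨w.1.1, w.1.2.1, congrArg Prod.fst w.2⟩ : {w | w ∈ {w | NR w} ∧ w.length = k.1})) ?_
    intro w w' hw
    have := congrArg Subtype.val hw
    exact Subtype.ext (Subtype.ext this)
  have ex : ∀ k : ℕ × ℕ, Nonempty ({w : WA a // keyW w = k} ≃ {w : WA a' // keyW w = k}) := by
    intro k
    have := fin a k
    have := fin a' k
    exact Finite.card_eq.1 (by rw [card, card, h k.1 k.2])
  exact ⟨Equiv.ofFiberEquiv fun k => (ex k).some, fun w => Equiv.ofFiberEquiv_map _ w⟩

noncomputable def psiZ {a : List ℕ} (q : WA a × List ℕ) : List (List ℕ) :=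
  (q.2.splitLengths (comps q.1.1)).map cat

lemma psiZ_spec {a : List ℕ} {n : ℕ} {q : WA a × List ℕ} (hq : q ∈ ZS a n) :
    (∀ w ∈ psiZ q, NR w) ∧ cat (psiZ q) = q.1.1 ∧
      (psiZ q).map (fun w => (comps w).length) = q.2 := by
  have hs := comps_spec q.1.2.1
  have hsum : q.2.sum = (comps q.1.1).length := hq.2.1
  have hf := List.flatten_splitLengths (comps q.1.1) q.2 hsum.ge
  have hgood : ∀ l ∈ q.2.splitLengths (comps q.1.1), ∀ c ∈ l, Good c := by
    intro l hl c hc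
    exact hs.1 c (by rw [← hf]; exact List.mem_flatten.2 ⟨l, hl, hc⟩)
  refine ⟨?_, ?_, ?_⟩
  · intro w hw
    obtain ⟨l, hl, rfl⟩ := List.mem_map.1 hw
    exact nr_cat fun c hc => (hgood l hl c hc).nr
  · rw [psiZ, ← cat_flatten, hf, hs.2]
  · rw [psiZ, List.map_map]
    refine Eq.trans ?_ (List.map_splitLengths_length (comps q.1.1) q.2 hsum.le)
    apply List.map_congr_left
    intro l hl
    simp [comps_cat (hgood l hl)]

lemma ncard_ZS (a : List ℕ) (n : ℕ) :
    ({ws | ws ∈ YS a \ {[]} ∧ wtL ws = n} : Set (List (List ℕ))).ncard = (ZS a n).ncard := by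
  have e : ({ws | ws ∈ YS a \ {[]} ∧ wtL ws = n} : Set (List (List ℕ))) = psiZ '' ZS a n := by
    ext ws
    constructor
    · rintro ⟨⟨⟨h1, h2⟩, h3⟩, h4⟩
      have h3 : ws ≠ [] := by simpa using h3
      have hav := h2.resolve_left h3
      have hn := nr_cat h1
      have hg : ∀ c ∈ (ws.map comps).flatten, Good c := by
        intro c hc
        obtain ⟨l, hl, hc⟩ := List.mem_flatten.1 hc
        obtain ⟨w, hw, rfl⟩ := List.mem_map.1 hl
        exact (comps_spec (h1 w hw)).1 c hc
      have hmap : (ws.map comps).map cat = ws := by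
        rw [List.map_map]
        conv_rhs => rw [← List.map_id ws]
        apply List.map_congr_left
        intro w hw
        exact (comps_spec (h1 w hw)).2
      have hc : comps (cat ws) = (ws.map comps).flatten := by
        conv_lhs => rw [← hmap, ← cat_flatten]
        exact comps_cat hg
      refine ⟨(⟨cat ws, hn, hav⟩, (ws.map comps).map List.length), ⟨?_, ?_, ?_⟩, ?_⟩
      · simpa using h3
      · simp only [keyW, hc, List.length_flatten]
      · simp only [keyW, List.length_map]
        rw [← h4, wtL_eq]
      · simp only [psiZ, hc]
        rw [splitLengths_flatten, hmap]
    · rintro ⟨q, hq, rfl⟩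
      obtain ⟨h1, h2, h3⟩ := psiZ_spec hq
      have hl : (psiZ q).length = q.2.length := by
        have := congrArg List.length h3
        simpa using this
      refine ⟨⟨⟨h1, Or.inr (by rw [h2]; exact q.1.2.2)⟩, ?_⟩, ?_⟩
      · intro h
        rw [Set.mem_singleton_iff] at h
        apply hq.1
        rw [← h3, h]; rfl
      · rw [wtL_eq, h2, hl]
        exact hq.2.2
  rw [e]
  apply Set.ncard_image_of_injOn
  rintro q hq q' hq' h
  obtain ⟨_, h2, h3⟩ := psiZ_spec hq
  obtain ⟨_, h2', h3'⟩ := psiZ_spec hq'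
  refine Prod.ext (Subtype.ext ?_) ?_
  · rw [← h2, h, h2']
  · rw [← h3, h, h3']

lemma gf_YS_eq {a a' : List ℕ} (h : ccEquiv a a') : gf wtL (YS a) = gf wtL (YS a') := by
  have e2 : ∀ c, YS c = (YS c \ {[]}) ∪ {[]} := by
    intro c
    ext ws
    by_cases h : ws = []
    · subst h; simp [nil_mem_YS]
    · simp [h]
  have g1 : ∀ c, gf wtL (YS c) = gf wtL (YS c \ {[]}) + 1 := by
    intro c
    conv_lhs => rw [e2]
    rw [gf_union ((ff_YS c).mono Set.diff_subset)
      ((ff_YS c).mono (by simpa using nil_mem_YS c)) (by simp), gf_singleton (by simp [wtL])]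
  rw [g1, g1]
  congr 1
  ext n
  simp only [gf, coeff_mk]
  rw [ncard_ZS, ncard_ZS]
  congr 1
  obtain ⟨e, he⟩ := exists_equiv h
  have : ZS a' n = (e.prodCongr (Equiv.refl (List ℕ))) '' ZS a n := by
    ext ⟨w, ps⟩
    constructor
    · intro hq
      refine ⟨(e.symm w, ps), ?_, by simp⟩
      have := he (e.symm w)
      rw [Equiv.apply_symm_apply] at this
      simpa [ZS, ← this] using hq
    · rintro ⟨⟨w', ps'⟩, hq, h1⟩
      simp only [Equiv.prodCongr_apply, Prod.map_apply, Equiv.coe_refl, id, Prod.mk.injEq] at h1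
      obtain ⟨rfl, rfl⟩ := h1
      simpa [ZS, he] using hq
  rw [this, Set.ncard_image_of_injective _ (Equiv.injective _)]

end Series

/-- Theorem 3.6: in `1[σ₁]1⋯1[σ_k]1`, replacing a non-final factor `σ_q` by a
cc-equivalent pattern yields a cc-equivalent pattern. -/
theorem stmt10 (pre post : List (List ℕ)) (a a' : List ℕ)
    (hall : ∀ c ∈ pre ++ [a] ++ post, IsRGF c ∧ NonCrossing c)
    (ha' : IsRGF a') (ha'nc : NonCrossing a')
    (hpost : post ≠ [])
    (h : ccEquiv a a') :
    ccEquiv (onePat (pre ++ [a] ++ post)) (onePat (pre ++ [a'] ++ post)) := by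
  have hpre : ∀ c ∈ pre ++ [a] ++ post, IsRGF c := fun c hc => (hall c hc).1
  refine ccEquiv_of_forall₂ hpre ?_ ?_
  · intro c hc
    simp only [List.mem_append, List.mem_singleton] at hc
    rcases hc with (hc | rfl) | hc
    · exact hpre c (by simp [hc])
    · exact ha'
    · exact hpre c (by simp [hc])
  · refine List.rel_append (List.rel_append ?_ ?_) ?_
    · exact List.forall₂_same.2 fun _ _ => rfl
    · exact List.Forall₂.cons (gf_YS_eq h) List.Forall₂.nil
    · exact List.forall₂_same.2 fun _ _ => rfl
end

section
/- Let σ and τ be two non-crossing RGFs, each either empty or connected. Then for every n, the number of non-crossing RGFs of length n avoiding the pattern 1[σ]1[τ] equals the number of non-crossing RGFs of length n avoiding the pattern 1[τ]1[σ]. -/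
namespace NC11

/-- Recursive version of the restricted growth condition, with current maximum `m`. -/
def R : ℕ → List ℕ → Prop
  | _, [] => True
  | m, x :: w => 1 ≤ x ∧ x ≤ m + 1 ∧ R (max m x) w

/-- `1[c₁]1[c₂]⋯1[c_k]` with accumulated shift `s`. -/
def J : ℕ → List (List ℕ) → List ℕ
  | _, [] => []
  | s, c :: rest => 1 :: (c.map (· + s) ++ J (s + nLetters c) rest)

theorem nL_cons (x : ℕ) (w : List ℕ) : nLetters (x :: w) = max x (nLetters w) := rfl

theorem nL_append (u v : List ℕ) : nLetters (u ++ v) = max (nLetters u) (nLetters v) := by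
  induction u with
  | nil => simp [nLetters]
  | cons x u ih => rw [List.cons_append, nL_cons, nL_cons, ih]; omega

theorem le_nL {x : ℕ} {w : List ℕ} (h : x ∈ w) : x ≤ nLetters w := by
  induction w with
  | nil => simp at h
  | cons y w ih =>
    rw [nL_cons]
    rcases List.mem_cons.1 h with h | h
    · omega
    · have := ih h; omega

theorem nL_mem {w : List ℕ} (h : w ≠ []) : nLetters w ∈ w := by
  induction w with
  | nil => simp at h
  | cons y w ih =>
    rw [nL_cons]
    by_cases hw : w = []
    · subst hw; simp [nLetters]
    · have := ih hw
      rcases le_total y (nLetters w) with h | h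
      · rw [max_eq_right h]; simp [this]
      · rw [max_eq_left h]; simp

theorem nL_map (c : List ℕ) (s : ℕ) : max s (nLetters (c.map (· + s))) = s + nLetters c := by
  induction c with
  | nil => simp [nLetters]
  | cons x c ih => rw [List.map_cons, nL_cons, nL_cons]; omega

theorem R_append (u v : List ℕ) (m : ℕ) : R m (u ++ v) ↔ R m u ∧ R (max m (nLetters u)) v := by
  induction u generalizing m with
  | nil => simp [R, nLetters]
  | cons x u ih =>
    simp only [List.cons_append, R, ih, nL_cons, max_assoc, and_assoc]

theorem R_pos {m : ℕ} {w : List ℕ} (h : R m w) : ∀ x ∈ w, 1 ≤ x := by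
  induction w generalizing m with
  | nil => simp
  | cons y w ih =>
    intro x hx
    rcases List.mem_cons.1 hx with hx | hx
    · subst hx; exact h.1
    · exact ih h.2.2 x hx

theorem R_shift {m : ℕ} {w : List ℕ} (k : ℕ) (h : R m w) : R (m + k) (w.map (· + k)) := by
  induction w generalizing m with
  | nil => simp [R]
  | cons y w ih =>
    obtain ⟨h1, h2, h3⟩ := h
    refine ⟨by show 1 ≤ y + k; omega, by show y + k ≤ m + k + 1; omega, ?_⟩
    have := ih h3
    rwa [show max m y + k = max (m + k) (y + k) by omega] at this

theorem R_unshift {m : ℕ} {w : List ℕ} (k : ℕ) (hw : ∀ x ∈ w, 1 ≤ x)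
    (h : R (m + k) (w.map (· + k))) : R m w := by
  induction w generalizing m with
  | nil => simp [R]
  | cons y w ih =>
    obtain ⟨h1, h2, h3⟩ := h
    have h2' : y + k ≤ m + k + 1 := h2
    refine ⟨hw y (by simp), by omega, ?_⟩
    apply ih (fun x hx => hw x (by simp [hx]))
    rwa [show max m y + k = max (m + k) (y + k) by omega]

theorem R_surj {m : ℕ} {w : List ℕ} (h : R m w) {y : ℕ} (h1 : m < y)
    (h2 : y ≤ max m (nLetters w)) : y ∈ w := by
  induction w generalizing m with
  | nil => simp [nLetters] at h2; omega
  | cons x w ih =>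
    obtain ⟨ha, hb, hc⟩ := h
    rw [nL_cons] at h2
    by_cases hy : y = x
    · simp [hy]
    · exact List.mem_cons_of_mem _ (ih hc (by omega) (by omega))

/-- The growth condition by indices, relative to a maximum. -/
theorem R_iff (m : ℕ) (w : List ℕ) : R m w ↔ (∀ x ∈ w, 1 ≤ x) ∧
    ∀ i, i < w.length → w.getD i 0 ≤ max m ((w.take i).foldr max 0) + 1 := by
  induction w generalizing m with
  | nil => simp [R]
  | cons y w ih =>
    rw [R, ih]
    constructor
    · rintro ⟨h1, h2, h3, h4⟩
      refine ⟨by simpa using ⟨h1, h3⟩, ?_⟩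
      intro i hi
      cases i with
      | zero => simpa using h2
      | succ i =>
        have := h4 i (by simpa using hi)
        simp only [List.getD_cons_succ, List.take_succ_cons, List.foldr_cons]
        omega
    · rintro ⟨h1, h2⟩
      refine ⟨h1 y (by simp), by simpa using h2 0 (by simp), fun x hx => h1 x (by simp [hx]), ?_⟩
      intro i hi
      have := h2 (i + 1) (by simpa using hi)
      simp only [List.getD_cons_succ, List.take_succ_cons, List.foldr_cons] at this
      omega

theorem isRGF_iff (w : List ℕ) : IsRGF w ↔ R 0 w := by
  rw [R_iff, IsRGF]
  constructor
  · rintro ⟨h1, h2, h3⟩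
    refine ⟨h1, ?_⟩
    intro i hi
    cases i with
    | zero =>
      have := h2 (by rintro rfl; simp at hi)
      omega
    | succ i => have := h3 i hi; omega
  · rintro ⟨h1, h2⟩
    refine ⟨h1, ?_, ?_⟩
    · intro hne
      have hl : 0 < w.length := List.length_pos_iff.2 hne
      have := h2 0 hl
      have h3 : 1 ≤ w.getD 0 0 := by
        apply h1
        rw [List.getD_eq_getElem _ _ hl]
        exact List.getElem_mem hl
      simp only [List.take_zero, List.foldr_nil] at this
      omega
    · intro i hi
      have := h2 (i + 1) hi
      omega

theorem patContains_iff (w p : List ℕ) : PatContains w p ↔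
    ∃ g : ℕ → ℕ, StrictMonoOn g {x | x ∈ p} ∧ (p.map g).Sublist w := by
  constructor
  · rintro ⟨s, hs, hl, h⟩
    have key : p.map (fun x => s.getD (p.idxOf x) 0) = s := by
      apply List.ext_getElem
      · simp [hl]
      · intro i h1 h2
        have hip : i < p.length := by simpa using h1
        have hj : p.idxOf p[i] < p.length := List.idxOf_lt_length_of_mem (List.getElem_mem hip)
        have e1 := h i (p.idxOf p[i]) (by omega) (by omega)
        have e2 := h (p.idxOf p[i]) i (by omega) (by omega)
        rw [List.getD_eq_getElem p _ hip, List.getD_eq_getElem p _ hj,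
          List.getElem_idxOf hj, List.getD_eq_getElem s _ h2] at e1 e2
        simp only [List.getElem_map]
        omega
    refine ⟨fun x => s.getD (p.idxOf x) 0, ?_, by rw [key]; exact hs⟩
    intro x hx y hy hxy
    have hx' : p.idxOf x < p.length := List.idxOf_lt_length_of_mem hx
    have hy' : p.idxOf y < p.length := List.idxOf_lt_length_of_mem hy
    have := h (p.idxOf x) (p.idxOf y) (by omega) (by omega)
    rw [List.getD_eq_getElem p _ hx', List.getD_eq_getElem p _ hy',
      List.getElem_idxOf hx', List.getElem_idxOf hy'] at this
    exact this.2 hxy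
  · rintro ⟨g, hg, hs⟩
    refine ⟨p.map g, hs, by simp, ?_⟩
    intro i j hi hj
    have hi' : i < p.length := by simpa using hi
    have hj' : j < p.length := by simpa using hj
    rw [List.getD_eq_getElem _ _ hi, List.getD_eq_getElem _ _ hj,
      List.getD_eq_getElem _ _ hi', List.getD_eq_getElem _ _ hj', List.getElem_map,
      List.getElem_map]
    exact hg.lt_iff_lt (List.getElem_mem hi') (List.getElem_mem hj')

theorem contains_sub {w w' p : List ℕ} (h : w.Sublist w') (hp : PatContains w p) :
    PatContains w' p := by
  obtain ⟨s, hs, h'⟩ := hp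
  exact ⟨s, hs.trans h, h'⟩

theorem contains_nil (w : List ℕ) : PatContains w [] :=
  ⟨[], List.nil_sublist _, by simp [WordOrdIso]⟩

theorem contains_shift (w p : List ℕ) (k : ℕ) :
    PatContains (w.map (· + k)) p ↔ PatContains w p := by
  rw [patContains_iff, patContains_iff]
  constructor
  · rintro ⟨g, hg, hs⟩
    have hk : ∀ x ∈ p, k ≤ g x := by
      intro x hx
      have := hs.subset (List.mem_map_of_mem (f := g) hx)
      simp only [List.mem_map] at this
      omega
    refine ⟨fun x => g x - k, ?_, ?_⟩
    · intro x hx y hy hxy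
      have := hg hx hy hxy
      have := hk x hx
      show g x - k < g y - k
      omega
    · have := hs.map (· - k)
      simpa [List.map_map, Function.comp_def] using this
  · rintro ⟨g, hg, hs⟩
    refine ⟨fun x => g x + k, ?_, ?_⟩
    · intro x hx y hy hxy
      have := hg hx hy hxy
      show g x + k < g y + k
      omega
    · have := hs.map (· + k)
      simpa [List.map_map, Function.comp_def] using this

/-- letters of `p` shifted up: an occurrence of a shifted pattern is an occurrence. -/
theorem contains_of_shift {w p : List ℕ} (k : ℕ) (g : ℕ → ℕ)
    (hg : StrictMonoOn g {x | x ∈ p.map (· + k)}) (hs : ((p.map (· + k)).map g).Sublist w) :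
    PatContains w p := by
  rw [patContains_iff]
  refine ⟨fun x => g (x + k), ?_, by simpa [List.map_map, Function.comp_def] using hs⟩
  intro x hx y hy hxy
  exact hg (List.mem_map.2 ⟨x, hx, rfl⟩) (List.mem_map.2 ⟨y, hy, rfl⟩) (by omega)

theorem J_mem {s : ℕ} {l : List (List ℕ)} (hl : ∀ c ∈ l, ∀ x ∈ c, 1 ≤ x) :
    ∀ x ∈ J s l, x = 1 ∨ s < x := by
  induction l generalizing s with
  | nil => simp [J]
  | cons c l ih =>
    intro x hx
    simp only [J, List.mem_cons, List.mem_append, List.mem_map] at hx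
    rcases hx with hx | ⟨y, hy, rfl⟩ | hx
    · exact Or.inl hx
    · have := hl c (by simp) y hy; right; omega
    · rcases ih (fun c hc => hl c (by simp [hc])) x hx with h | h
      · exact Or.inl h
      · right; omega

theorem J_length (s : ℕ) (l : List (List ℕ)) :
    (J s l).length = (l.map (fun c => c.length + 1)).sum := by
  induction l generalizing s with
  | nil => simp [J]
  | cons c l ih => simp [J, ih]; omega

theorem J_length_lt {s : ℕ} {l : List (List ℕ)} {c : List ℕ} (h : c ∈ l) :
    c.length < (J s l).length := by
  rw [J_length]
  have := List.single_le_sum (l := l.map (fun c => c.length + 1)) (by simp) (c.length + 1)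
    (List.mem_map.2 ⟨c, h, rfl⟩)
  omega

theorem J_sub_mem {s : ℕ} {l : List (List ℕ)} {c : List ℕ} (h : c ∈ l) :
    ∃ k, s ≤ k ∧ (1 :: c.map (· + k)).Sublist (J s l) := by
  induction l generalizing s with
  | nil => simp at h
  | cons d l ih =>
    rcases List.mem_cons.1 h with h | h
    · subst h
      exact ⟨s, le_rfl, (List.sublist_append_left _ _).cons_cons 1⟩
    · obtain ⟨k, hk, hs⟩ := ih (s := s + nLetters d) h
      exact ⟨k, by omega, (hs.trans (List.sublist_append_right _ _)).cons 1⟩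

theorem J_R {s m : ℕ} {l : List (List ℕ)} (hl : ∀ c ∈ l, R 0 c) (hs : 1 ≤ s)
    (hm : max m 1 = s) : R m (J s l) := by
  induction l generalizing s m with
  | nil => simp [J, R]
  | cons c l ih =>
    refine ⟨le_rfl, by omega, ?_⟩
    rw [hm, R_append, nL_map]
    refine ⟨?_, ih (fun c hc => hl c (by simp [hc])) (by omega) (by omega)⟩
    have := R_shift s (hl c (by simp))
    simpa using this

/-- Splitting lemma -/
theorem split_eq {u v p q : List ℕ} (hu : 1 ∉ u) (hv : 1 ∉ v)
    (hp : p = [] ∨ ∃ t, p = 1 :: t) (hq : q = [] ∨ ∃ t, q = 1 :: t)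
    (h : u ++ p = v ++ q) : u = v ∧ p = q := by
  induction u generalizing v with
  | nil =>
    cases v with
    | nil => simpa using h
    | cons y v =>
      exfalso
      simp only [List.nil_append, List.cons_append] at h
      rcases hp with rfl | ⟨t, rfl⟩
      · simp at h
      · simp only [List.cons.injEq] at h
        exact hv (by simp [← h.1])
  | cons x u ih =>
    cases v with
    | nil =>
      exfalso
      simp only [List.nil_append, List.cons_append] at h
      rcases hq with rfl | ⟨t, rfl⟩
      · simp at h
      · simp only [List.cons.injEq] at h
        exact hu (by simp [← h.1])
    | cons y v =>
      simp only [List.cons_append, List.cons.injEq] at h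
      obtain ⟨rfl, h⟩ := h
      obtain ⟨rfl, h'⟩ := ih (fun h => hu (by simp [h])) (fun h => hv (by simp [h])) h
      exact ⟨rfl, h'⟩

theorem J_head (s : ℕ) (l : List (List ℕ)) : J s l = [] ∨ ∃ t, J s l = 1 :: t := by
  cases l with
  | nil => simp [J]
  | cons c l => right; exact ⟨_, rfl⟩

theorem one_notMem_shift {s : ℕ} {c : List ℕ} (hs : 1 ≤ s) (hc : ∀ x ∈ c, 1 ≤ x) :
    1 ∉ c.map (· + s) := by
  simp only [List.mem_map, not_exists, not_and]
  intro x hx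
  have := hc x hx
  omega

theorem J_inj {s : ℕ} {l l' : List (List ℕ)} (hs : 1 ≤ s) (hl : ∀ c ∈ l, ∀ x ∈ c, 1 ≤ x)
    (hl' : ∀ c ∈ l', ∀ x ∈ c, 1 ≤ x) (h : J s l = J s l') : l = l' := by
  induction l generalizing s l' with
  | nil =>
    cases l' with
    | nil => rfl
    | cons c l' => simp [J] at h
  | cons c l ih =>
    cases l' with
    | nil => simp [J] at h
    | cons d l' =>
      simp only [J, List.cons.injEq, true_and] at h
      obtain ⟨h1, h2⟩ := split_eq (one_notMem_shift hs (hl c (by simp)))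
        (one_notMem_shift hs (hl' d (by simp))) (J_head _ _) (J_head _ _) h
      have : c = d := List.map_injective_iff.2 (fun a b h => by simpa using h) h1
      subst this
      rw [ih (by omega) (fun c hc => hl c (by simp [hc])) (fun c hc => hl' c (by simp [hc])) h2]

theorem nc_iff (w : List ℕ) : NonCrossing w ↔ ∀ a b, a < b → ¬ [a, b, a, b].Sublist w := by
  rw [NonCrossing, PatAvoids, patContains_iff]
  constructor
  · intro h a b hab hs
    refine h ⟨fun x => if x = 1 then a else b, ?_, by simpa using hs⟩
    intro x hx y hy hxy
    simp at hx hy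
    have h1 : x = 1 := by omega
    have h2 : y = 2 := by omega
    subst h1 h2
    simpa using hab
  · rintro h ⟨g, hg, hs⟩
    exact h (g 1) (g 2) (hg (by simp) (by simp) (by omega)) (by simpa using hs)

theorem nc_shift {w : List ℕ} (k : ℕ) : NonCrossing (w.map (· + k)) ↔ NonCrossing w := by
  rw [NonCrossing, NonCrossing, PatAvoids, PatAvoids, contains_shift]

theorem J_split {s : ℕ} {c : List ℕ} {l : List (List ℕ)}
    (hl : ∀ c ∈ l, ∀ x ∈ c, 1 ≤ x) {u v : List ℕ} (hu : u.Sublist (c.map (· + s)))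
    (hv : v.Sublist (J (s + nLetters c) l)) :
    ∀ x ∈ u, ∀ y ∈ v, y ≠ 1 → x < y := by
  intro x hx y hy hy1
  have h1 := hu.subset hx
  have h2 := J_mem hl y (hv.subset hy)
  simp only [List.mem_map] at h1
  obtain ⟨z, hz, rfl⟩ := h1
  have := le_nL hz
  omega

theorem J_b1b {s : ℕ} {l : List (List ℕ)} (hs : 1 ≤ s) (hl : ∀ c ∈ l, ∀ x ∈ c, 1 ≤ x)
    {b : ℕ} (hb : 1 < b) : ¬ [b, 1, b].Sublist (J s l) := by
  induction l generalizing s with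
  | nil => simp [J]
  | cons c l ih =>
    intro h
    have h1 : [b, 1, b].Sublist (c.map (· + s) ++ J (s + nLetters c) l) := by
      rcases List.cons_sublist_cons'.1 h with h | h
      · exact h
      · omega
    obtain ⟨u, v, he, hu, hv⟩ := List.sublist_append_iff.1 h1
    have h2 := J_split (fun c hc => hl c (by simp [hc])) hu hv
    have h3 := one_notMem_shift hs (hl c (by simp))
    cases u with
    | nil =>
      simp at he
      subst he
      exact ih (by omega) (fun c hc => hl c (by simp [hc])) hv
    | cons x u =>
      simp at he
      obtain ⟨rfl, he⟩ := he
      cases u with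
      | nil =>
        simp at he
        subst he
        have := h2 b (by simp) b (by simp) (by omega)
        omega
      | cons y u =>
        simp at he
        obtain ⟨rfl, he⟩ := he
        exact h3 (hu.subset (by simp))

theorem J_nc {s : ℕ} {l : List (List ℕ)} (hs : 1 ≤ s) (hl : ∀ c ∈ l, ∀ x ∈ c, 1 ≤ x)
    (hn : ∀ c ∈ l, NonCrossing c) : NonCrossing (J s l) := by
  rw [nc_iff]
  intro a b hab
  induction l generalizing s with
  | nil => simp [J]
  | cons c l ih =>
    intro h
    have hl' : ∀ c ∈ l, ∀ x ∈ c, 1 ≤ x := fun c hc => hl c (by simp [hc])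
    have ha : 1 ≤ a := by
      rcases J_mem hl a (h.subset (by simp)) with h | h <;> omega
    by_cases ha1 : a = 1
    · subst ha1
      exact J_b1b hs hl hab ((List.sublist_cons_self _ _).trans h)
    have h1 : [a, b, a, b].Sublist (c.map (· + s) ++ J (s + nLetters c) l) := by
      rcases List.cons_sublist_cons'.1 h with h | h
      · exact h
      · omega
    obtain ⟨u, v, he, hu, hv⟩ := List.sublist_append_iff.1 h1
    have h2 := J_split hl' hu hv
    cases u with
    | nil =>
      simp at he
      subst he
      exact ih (by omega) hl' (fun c hc => hn c (by simp [hc])) hv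
    | cons x u =>
      simp at he
      obtain ⟨rfl, he⟩ := he
      have hav : a ∉ v := fun h => by
        have := h2 a (by simp) a h ha1; omega
      have hbv : v ≠ [] → b ∈ v := by
        intro hv
        have := congrArg List.getLast? he
        rw [List.getLast?_append_of_ne_nil _ hv] at this
        simp at this
        exact List.mem_of_getLast? this.symm
      by_cases hv0 : v = []
      · subst hv0
        simp at he
        subst he
        exact (nc_iff _).1 ((nc_shift s).2 (hn c (by simp))) a b hab hu
      · have hbu : b ∈ u := by
          cases u with
          | nil => simp at he; subst he; simp at hav
          | cons y u => simp at he; simp [he.1]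
        have := h2 b (by simp [hbu]) b (hbv hv0) (by omega)
        omega

theorem takeWhile_ne (w : List ℕ) : ∃ u v, w = u ++ v ∧ 1 ∉ u ∧ (v = [] ∨ ∃ t, v = 1 :: t) := by
  induction w with
  | nil => exact ⟨[], [], by simp⟩
  | cons x w ih =>
    by_cases hx : x = 1
    · subst hx
      exact ⟨[], 1 :: w, by simp⟩
    · obtain ⟨u, v, rfl, h1, h2⟩ := ih
      exact ⟨x :: u, v, by simp, by simp [h1, Ne.symm hx], h2⟩

theorem nc_sub {u w : List ℕ} (h : u.Sublist w) (hw : NonCrossing w) : NonCrossing u :=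
  fun hc => hw (contains_sub h hc)

theorem J_surj_aux (N : ℕ) : ∀ (s : ℕ) (w : List ℕ), w.length ≤ N → 1 ≤ s → R s w →
    NonCrossing w → (∀ x ∈ w, x = 1 ∨ s < x) → (w = [] ∨ ∃ t, w = 1 :: t) →
    ∃ l, (∀ c ∈ l, R 0 c ∧ NonCrossing c) ∧ J s l = w := by
  induction N with
  | zero =>
    intro s w hw _ _ _ _ _
    have : w = [] := by simpa using hw
    subst this
    exact ⟨[], by simp, rfl⟩
  | succ N ih =>
    intro s w hlen hs hR hnc hx hw
    rcases hw with rfl | ⟨t, rfl⟩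
    · exact ⟨[], by simp, rfl⟩
    obtain ⟨u, v, rfl, hu, hv⟩ := takeWhile_ne t
    have hus : ∀ x ∈ u, s < x := by
      intro x hxu
      rcases hx x (by simp [hxu]) with h | h
      · subst h; exact absurd hxu hu
      · exact h
    obtain ⟨c, hc, rfl⟩ : ∃ c : List ℕ, (∀ x ∈ c, 1 ≤ x) ∧ c.map (· + s) = u := by
      refine ⟨u.map (· - s), ?_, ?_⟩
      · intro x hx
        simp only [List.mem_map] at hx
        obtain ⟨y, hy, rfl⟩ := hx
        have := hus y hy
        omega
      · rw [List.map_map]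
        conv_rhs => rw [← List.map_id u]
        apply List.map_congr_left
        intro x hx
        have := hus x hx
        simp; omega
    obtain ⟨_, _, hR⟩ := hR
    rw [max_eq_left hs, R_append, nL_map] at hR
    have hRc : R 0 c := R_unshift s hc (by simpa using hR.1)
    have hncv : NonCrossing v :=
      nc_sub ((List.sublist_append_right _ _).trans (List.sublist_cons_self _ _)) hnc
    have hncc : NonCrossing c :=
      (nc_shift s).1
        (nc_sub ((List.sublist_append_left _ _).trans (List.sublist_cons_self _ _)) hnc)
    obtain ⟨l, hl, rfl⟩ := ih (s + nLetters c) v (by simp at hlen; omega) (by omega) hR.2 hncv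
      (by
        intro x hxv
        by_contra hcon
        push Not at hcon
        obtain ⟨hx1, hx2⟩ := hcon
        have hxs : s < x := by
          rcases hx x (by simp [hxv]) with h | h
          · exact absurd h hx1
          · exact h
        have hxc : x - s ∈ c := R_surj hRc (by omega) (by omega)
        have hxu : x ∈ c.map (· + s) := List.mem_map.2 ⟨x - s, hxc, by omega⟩
        rcases hv with rfl | ⟨t, rfl⟩
        · simp at hxv
        have hxt : x ∈ t := by
          rcases List.mem_cons.1 hxv with h | h
          · exact absurd h hx1
          · exact h
        refine (nc_iff _).1 hnc 1 x (by omega) ?_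
        refine List.Sublist.cons_cons 1 ?_
        exact List.Sublist.append (l₁ := [x]) (l₂ := c.map (· + s)) (r₁ := [1, x]) (r₂ := 1 :: t)
          (List.singleton_sublist.2 hxu) ((List.singleton_sublist.2 hxt).cons_cons 1)) hv
    refine ⟨c :: l, ?_, rfl⟩
    intro d hd
    rcases List.mem_cons.1 hd with h | h
    · subst h; exact ⟨hRc, hncc⟩
    · exact hl d h

theorem J_surj {w : List ℕ} (hw : IsRGF w) (hnc : NonCrossing w) :
    ∃ l, (∀ c ∈ l, IsRGF c ∧ NonCrossing c) ∧ J 1 l = w := by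
  simp only [isRGF_iff] at *
  cases w with
  | nil => exact ⟨[], by simp, rfl⟩
  | cons x w =>
    have hpos := R_pos hw
    obtain ⟨h1, h2, h3⟩ := hw
    have hx : x = 1 := by omega
    subst hx
    refine J_surj_aux _ 1 (1 :: w) le_rfl le_rfl ⟨le_rfl, by omega, by simpa using h3⟩ hnc ?_ ?_
    · intro y hy
      have := hpos y hy
      omega
    · exact Or.inr ⟨w, rfl⟩

theorem conn_split {q q1 q2 : List ℕ} (hq : IsRGF q) (hc : q = [] ∨ Connected q)
    (he : q = q1 ++ q2) (hlt : ∀ x ∈ q1, ∀ y ∈ q2, x < y) : q1 = [] ∨ q2 = [] := by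
  rcases hc with rfl | hc
  · left; simpa using (List.append_eq_nil_iff.1 he.symm).1
  by_contra hcon
  push Not at hcon
  obtain ⟨h1, h2⟩ := hcon
  apply hc.2
  have hgt : ∀ y ∈ q2, nLetters q1 < y := hlt _ (nL_mem h1)
  have hb : (q2.map (· - nLetters q1)).map (· + nLetters q1) = q2 := by
    rw [List.map_map]
    conv_rhs => rw [← List.map_id q2]
    apply List.map_congr_left
    intro x hx
    have := hgt x hx
    simp; omega
  rw [isRGF_iff, he, R_append] at hq
  refine ⟨q1, q2.map (· - nLetters q1), (isRGF_iff _).2 hq.1, (isRGF_iff _).2 ?_, h1, by simpa,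
    by rw [rgfComp, hb, he]⟩
  apply R_unshift (nLetters q1)
  · intro x hx
    simp only [List.mem_map] at hx
    obtain ⟨y, hy, rfl⟩ := hx
    have := hgt y hy
    omega
  · rw [hb]; simpa using hq.2

theorem conn_split_map {q q1 q2 : List ℕ} (hq : IsRGF q) (hc : q = [] ∨ Connected q) {g : ℕ → ℕ}
    (hg : StrictMonoOn g {x | x ∈ q})
    (he : q.map g = q1 ++ q2) (hlt : ∀ x ∈ q1, ∀ y ∈ q2, x < y) : q1 = [] ∨ q2 = [] := by
  obtain ⟨r1, r2, rfl, rfl, rfl⟩ := List.map_eq_append_iff.1 he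
  have := conn_split hq hc rfl (by
    intro x hx y hy
    have := hlt _ (List.mem_map_of_mem hx) _ (List.mem_map_of_mem hy)
    exact (hg.lt_iff_lt (by simp [hx]) (by simp [hy])).1 this)
  rcases this with h | h <;> simp [h]

theorem sub_of_ne {x : List ℕ} {w : List ℕ} (hx : ∀ y ∈ x, y ≠ 1) (h : x.Sublist (1 :: w)) :
    x.Sublist w := by
  cases x with
  | nil => exact List.nil_sublist _
  | cons y x =>
    rcases List.cons_sublist_cons'.1 h with h | h
    · exact h
    · exact absurd h.1 (hx y (by simp))

theorem K1 {q : List ℕ} (hq : IsRGF q) (hc : q = [] ∨ Connected q) {g : ℕ → ℕ}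
    (hg : StrictMonoOn g {x | x ∈ q}) (hg1 : ∀ x ∈ q, g x ≠ 1) {s : ℕ} {l : List (List ℕ)}
    (hl : ∀ c ∈ l, ∀ x ∈ c, 1 ≤ x) (hne : l ≠ []) (h : (q.map g).Sublist (J s l)) :
    ∃ c ∈ l, PatContains c q := by
  induction l generalizing s with
  | nil => exact absurd rfl hne
  | cons c l ih =>
    have hl' : ∀ c ∈ l, ∀ x ∈ c, 1 ≤ x := fun c hc => hl c (by simp [hc])
    by_cases hq0 : q = []
    · subst hq0; exact ⟨c, by simp, contains_nil c⟩
    have hg1' : ∀ y ∈ q.map g, y ≠ 1 := by simpa using hg1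
    obtain ⟨u, v, he, hu, hv⟩ := List.sublist_append_iff.1 (sub_of_ne hg1' h)
    have h2 := J_split hl' hu hv
    rcases conn_split_map hq hc hg he (fun x hx y hy => h2 x hx y hy
      (hg1' y (by rw [he]; simp [hy]))) with rfl | rfl
    · have hl0 : l ≠ [] := by
        rintro rfl
        simp [J] at hv
        subst hv
        simp at he
        exact hq0 he
      obtain ⟨d, hd, hd'⟩ := ih hl' hl0 (by rw [he]; simpa using hv)
      exact ⟨d, by simp [hd], hd'⟩
    · refine ⟨c, by simp, (contains_shift c q s).1 ((patContains_iff _ _).2 ⟨g, hg, ?_⟩)⟩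
      rw [he]; simpa using hu

theorem K2 {x y : List ℕ} (hx : ∀ z ∈ x, z ≠ 1) {s : ℕ} {l : List (List ℕ)}
    (hl : ∀ c ∈ l, ∀ x ∈ c, 1 ≤ x) (hs : 1 ≤ s) (h : (x ++ 1 :: y).Sublist (J s l)) :
    ∃ l1 l2 s', l = l1 ++ l2 ∧ x.Sublist (J s l1) ∧ (1 :: y).Sublist (J s' l2) := by
  induction l generalizing s x with
  | nil => simp [J] at h
  | cons c l ih =>
    cases x with
    | nil => exact ⟨[], c :: l, s, rfl, by simp, h⟩
    | cons z x =>
      have h1 : ((z :: x) ++ 1 :: y).Sublist (c.map (· + s) ++ J (s + nLetters c) l) := by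
        rcases List.cons_sublist_cons'.1 h with h | h
        · exact h
        · exact absurd h.1 (hx z (by simp))
      obtain ⟨u, v, he, hu, hv⟩ := List.sublist_append_iff.1 h1
      have h3 := one_notMem_shift hs (hl c (by simp))
      obtain ⟨x2, hx2, rfl⟩ : ∃ x2, z :: x = u ++ x2 ∧ v = x2 ++ 1 :: y := by
        rcases List.append_eq_append_iff.1 he with ⟨a, ha, hb⟩ | ⟨a, ha, hb⟩
        · cases a with
          | nil => exact ⟨[], by simpa using ha.symm, by simpa using hb.symm⟩
          | cons b a =>
            simp at hb
            exfalso
            apply h3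
            apply hu.subset
            rw [ha, ← hb.1]; simp
        · exact ⟨a, ha, hb⟩
      rw [hx2]
      obtain ⟨l1, l2, s', rfl, ha, hb⟩ := ih (x := x2)
        (fun w hw => hx w (by rw [hx2]; simp [hw]))
        (fun c hc => hl c (by simp [hc])) (by omega) hv
      exact ⟨c :: l1, l2, s', rfl, (hu.append ha).cons 1, hb⟩

/-- Case where the smallest letter of the occurrence is 1. -/
theorem K3 {x y : List ℕ} (hx : ∀ z ∈ x, z ≠ 1) {s : ℕ} {l : List (List ℕ)}
    (hl : ∀ c ∈ l, ∀ x ∈ c, 1 ≤ x) (hs : 1 ≤ s) (h : (1 :: (x ++ 1 :: y)).Sublist (J s l)) :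
    ∃ l1 l2 s', l = l1 ++ l2 ∧ l1 ≠ [] ∧ x.Sublist (J s l1) ∧ (1 :: y).Sublist (J s' l2) := by
  cases l with
  | nil => simp [J] at h
  | cons c l =>
    have h1 : (x ++ 1 :: y).Sublist (c.map (· + s) ++ J (s + nLetters c) l) :=
      List.cons_sublist_cons.1 h
    obtain ⟨u, v, he, hu, hv⟩ := List.sublist_append_iff.1 h1
    have h3 := one_notMem_shift hs (hl c (by simp))
    obtain ⟨x2, rfl, rfl⟩ : ∃ x2, x = u ++ x2 ∧ v = x2 ++ 1 :: y := by
      rcases List.append_eq_append_iff.1 he with ⟨a, ha, hb⟩ | ⟨a, ha, hb⟩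
      · cases a with
        | nil => exact ⟨[], by simpa using ha.symm, by simpa using hb.symm⟩
        | cons b a =>
          simp at hb
          exfalso
          apply h3
          apply hu.subset
          rw [ha, ← hb.1]; simp
      · exact ⟨a, ha, hb⟩
    obtain ⟨l1, l2, s', rfl, ha, hb⟩ := K2 (x := x2)
      (fun w hw => hx w (by simp [hw]))
      (fun c hc => hl c (by simp [hc])) (by omega) hv
    exact ⟨c :: l1, l2, s', rfl, by simp, (hu.append ha).cons 1, hb⟩

theorem pairwise_of_append {S T : List ℕ → Prop} {l1 l2 : List (List ℕ)} {a b : List ℕ}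
    (ha : a ∈ l1) (hb : b ∈ l2) (hS : S a) (hT : T b) :
    ¬ (l1 ++ l2).Pairwise (fun a b => ¬ (S a ∧ T b)) := by
  intro h
  exact (List.pairwise_append.1 h).2.2 a ha b hb ⟨hS, hT⟩

theorem contains_fwd {σ τ : List ℕ} (hσ : IsRGF σ) (hσc : σ = [] ∨ Connected σ)
    (hτ : IsRGF τ) (hτc : τ = [] ∨ Connected τ) {s : ℕ} {l : List (List ℕ)} (hs : 1 ≤ s)
    (hl : ∀ c ∈ l, ∀ x ∈ c, 1 ≤ x) (h : PatContains (J s l) (pat2 σ τ)) :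
    (∃ c ∈ l, PatContains c (pat2 σ τ)) ∨
      ¬ l.Pairwise (fun a b => ¬ (PatContains a σ ∧ PatContains b τ)) := by
  obtain ⟨G, hG, hsub⟩ := (patContains_iff _ _).1 h
  have hσ1 := R_pos ((isRGF_iff _).1 hσ)
  have hτ1 := R_pos ((isRGF_iff _).1 hτ)
  -- the two maps
  let gs : ℕ → ℕ := fun x => G (x + 1)
  let gt : ℕ → ℕ := fun x => G (x + (1 + nLetters σ))
  have hgs : StrictMonoOn gs {x | x ∈ σ} := by
    intro x hx y hy hxy
    exact hG (by simp [pat2]; right; left; exact hx) (by simp [pat2]; right; left; exact hy)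
      (by omega)
  have hgt : StrictMonoOn gt {x | x ∈ τ} := by
    intro x hx y hy hxy
    exact hG (by simp [pat2]; right; right; right; exact hx) (by simp [pat2]; right; right; right; exact hy)
      (by omega)
  have hgsa : ∀ x ∈ σ, G 1 < gs x := by
    intro x hx
    have := hσ1 x hx
    exact hG (by simp [pat2]) (by simp [pat2]; right; left; exact hx) (by omega)
  have hgta : ∀ x ∈ τ, G 1 < gt x := by
    intro x hx
    have := hτ1 x hx
    exact hG (by simp [pat2]) (by simp [pat2]; right; right; right; exact hx) (by omega)
  have hmap : (pat2 σ τ).map G = G 1 :: (σ.map gs ++ G 1 :: τ.map gt) := by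
    simp [pat2, gs, gt, Function.comp_def]
  rw [hmap] at hsub
  have hG1 : 1 ≤ G 1 := by
    rcases J_mem hl (G 1) (hsub.subset (by simp)) with h | h <;> omega
  have hgs1 : ∀ x ∈ σ, gs x ≠ 1 := fun x hx => by have := hgsa x hx; omega
  have hgt1 : ∀ x ∈ τ, gt x ≠ 1 := fun x hx => by have := hgta x hx; omega
  by_cases ha : G 1 = 1
  · right
    rw [ha] at hsub
    obtain ⟨l1, l2, s', rfl, hl1, hx, hy⟩ := K3 (by simpa using hgs1) hl hs hsub
    obtain ⟨a, ha1, ha2⟩ := K1 hσ hσc hgs hgs1 (fun c hc => hl c (by simp [hc])) hl1 hx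
    obtain ⟨b, hb1, hb2⟩ := K1 hτ hτc hgt hgt1 (fun c hc => hl c (by simp [hc]))
      (by rintro rfl; simp [J] at hy) ((List.sublist_cons_self _ _).trans hy)
    exact pairwise_of_append ha1 hb1 ha2 hb2
  · clear h
    induction l generalizing s with
    | nil => simp [J] at hsub
    | cons c l ih =>
      have hl' : ∀ c ∈ l, ∀ x ∈ c, 1 ≤ x := fun c hc => hl c (by simp [hc])
      have h1 : (G 1 :: (σ.map gs ++ G 1 :: τ.map gt)).Sublist
          (c.map (· + s) ++ J (s + nLetters c) l) := by
        rcases List.cons_sublist_cons'.1 hsub with h | h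
        · exact h
        · exact absurd h.1 ha
      obtain ⟨u, v, he, hu, hv⟩ := List.sublist_append_iff.1 h1
      have h2 := J_split hl' hu hv
      by_cases hu0 : u = []
      · subst hu0
        simp only [List.nil_append] at he
        rw [← he] at hv
        rcases ih (s := s + nLetters c) (by omega) hl' hv with ⟨d, hd, hd'⟩ | hp
        · exact Or.inl ⟨d, by simp [hd], hd'⟩
        · exact Or.inr (fun h => hp (List.pairwise_cons.1 h).2)
      have hau : G 1 ∈ u := by
        cases u with
        | nil => exact absurd rfl hu0
        | cons z u => simp at he; simp [he.1]
      have hav : G 1 ∉ v := fun h => by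
        have := h2 _ hau _ h ha; omega
      obtain ⟨y1, rfl, hy⟩ : ∃ y1, u = (G 1 :: (σ.map gs ++ [G 1])) ++ y1 ∧
          τ.map gt = y1 ++ v := by
        have he' : (G 1 :: (σ.map gs ++ [G 1])) ++ τ.map gt = u ++ v := by rw [← he]; simp
        rcases List.append_eq_append_iff.1 he' with ⟨a, ha, hb⟩ | ⟨a, ha, hb⟩
        · exact ⟨a, ha, hb⟩
        · cases a using List.reverseRecOn with
          | nil => exact ⟨[], by simpa using ha.symm, by simpa using hb.symm⟩
          | append_singleton a z _ =>
            exfalso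
            have := congrArg List.getLast? ha
            rw [← List.append_assoc, ← List.cons_append, List.getLast?_concat,
              List.getLast?_concat] at this
            simp at this
            exact hav (by rw [hb, this]; simp)
      have hv1 : ∀ z ∈ v, z ≠ 1 := by
        intro z hz
        have : z ∈ τ.map gt := by rw [hy]; simp [hz]
        simp only [List.mem_map] at this
        obtain ⟨w, hw, rfl⟩ := this
        exact hgt1 w hw
      rcases conn_split_map hτ hτc hgt hy
        (fun x hx y hy => h2 x (by simp [hx]) y hy (hv1 y hy)) with rfl | rfl
      · by_cases hτ0 : τ = []
        · subst hτ0
          left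
          refine ⟨c, by simp, (contains_shift _ _ s).1 ((patContains_iff _ _).2 ⟨G, hG, ?_⟩)⟩
          rw [hmap]
          simpa using hu
        · right
          have hl0 : l ≠ [] := by
            rintro rfl
            simp [J] at hv
            subst hv
            simp at hy
            exact hτ0 hy
          obtain ⟨b, hb1, hb2⟩ := K1 hτ hτc hgt hgt1 hl' hl0 (by rw [hy]; simpa using hv)
          have hcσ : PatContains c σ := by
            refine (contains_shift _ _ s).1 ((patContains_iff _ _).2 ⟨gs, hgs, ?_⟩)
            refine List.Sublist.trans ?_ hu
            simp only [List.append_nil]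
            exact (List.sublist_append_left _ _).trans (List.sublist_cons_self _ _)
          exact pairwise_of_append (l1 := [c]) (by simp) hb1 hcσ hb2
      · left
        refine ⟨c, by simp, (contains_shift _ _ s).1 ((patContains_iff _ _).2 ⟨G, hG, ?_⟩)⟩
        rw [hmap, hy]
        simpa using hu

theorem J_sub_two {S T : List ℕ → Prop} {s : ℕ} {l : List (List ℕ)}
    (h : ¬ l.Pairwise (fun a b => ¬ (S a ∧ T b))) :
    ∃ a ∈ l, ∃ b ∈ l, S a ∧ T b ∧ ∃ k k', s ≤ k ∧ k + nLetters a ≤ k' ∧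
      (1 :: (a.map (· + k) ++ 1 :: b.map (· + k'))).Sublist (J s l) := by
  induction l generalizing s with
  | nil => simp at h
  | cons c l ih =>
    rw [List.pairwise_cons, not_and_or] at h
    rcases h with h | h
    · push Not at h
      obtain ⟨b, hb, hS, hT⟩ := h
      obtain ⟨k', hk', hsub⟩ := J_sub_mem (s := s + nLetters c) hb
      exact ⟨c, by simp, b, by simp [hb], hS, hT, s, k', le_rfl, hk',
        ((List.Sublist.refl _).append hsub).cons_cons 1⟩
    · obtain ⟨a, ha, b, hb, hS, hT, k, k', hk, hk', hsub⟩ := ih (s := s + nLetters c) h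
      exact ⟨a, by simp [ha], b, by simp [hb], hS, hT, k, k', by omega, hk',
        (hsub.trans (List.sublist_append_right _ _)).cons 1⟩

theorem contains_bwd {σ τ : List ℕ} (hσ : IsRGF σ) (hτ : IsRGF τ) {s : ℕ} {l : List (List ℕ)}
    (hs : 1 ≤ s) (hl : ∀ c ∈ l, ∀ x ∈ c, 1 ≤ x)
    (h : (∃ c ∈ l, PatContains c (pat2 σ τ)) ∨
      ¬ l.Pairwise (fun a b => ¬ (PatContains a σ ∧ PatContains b τ))) :
    PatContains (J s l) (pat2 σ τ) := by
  have hσ1 := R_pos ((isRGF_iff _).1 hσ)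
  have hτ1 := R_pos ((isRGF_iff _).1 hτ)
  rcases h with ⟨c, hc, h⟩ | h
  · obtain ⟨k, hk, hsub⟩ := J_sub_mem (s := s) hc
    exact contains_sub ((List.sublist_cons_self _ _).trans hsub) ((contains_shift _ _ k).2 h)
  · obtain ⟨a, ha, b, hb, hS, hT, k, k', hk, hk', hsub⟩ := J_sub_two (s := s) h
    obtain ⟨g, hg, hgs⟩ := (patContains_iff _ _).1 hS
    obtain ⟨f, hf, hfs⟩ := (patContains_iff _ _).1 hT
    have hga : ∀ x ∈ σ, 1 ≤ g x ∧ g x ≤ nLetters a := fun x hx => by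
      have := hgs.subset (List.mem_map_of_mem (f := g) hx)
      exact ⟨hl a ha _ this, le_nL this⟩
    have hfb : ∀ x ∈ τ, 1 ≤ f x := fun x hx =>
      hl b hb _ (hfs.subset (List.mem_map_of_mem (f := f) hx))
    refine contains_sub hsub ((patContains_iff _ _).2 ?_)
    let G : ℕ → ℕ := fun x => if x ≤ 1 then 1 else
      if x ≤ 1 + nLetters σ then g (x - 1) + k else f (x - (1 + nLetters σ)) + k'
    have G1 : G 1 = 1 := by simp [G]
    have Gs : ∀ x ∈ σ, G (x + 1) = g x + k := by
      intro x hx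
      have := hσ1 x hx
      have := le_nL hx
      simp only [G]
      rw [if_neg (by omega), if_pos (by omega)]; rfl
    have Gt : ∀ x ∈ τ, G (x + (1 + nLetters σ)) = f x + k' := by
      intro x hx
      have := hτ1 x hx
      simp only [G]
      rw [if_neg (by omega), if_neg (by omega), Nat.add_sub_cancel]
    refine ⟨G, ?_, ?_⟩
    · have hmem : ∀ x ∈ pat2 σ τ, x = 1 ∨ (∃ y ∈ σ, x = y + 1) ∨
          (∃ y ∈ τ, x = y + (1 + nLetters σ)) := by
        intro x hx
        simp only [pat2, List.mem_cons, List.mem_append, List.mem_map] at hx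
        rcases hx with h | ⟨y, h, e⟩ | h | ⟨y, h, e⟩
        · exact Or.inl h
        · exact Or.inr (Or.inl ⟨y, h, e.symm⟩)
        · exact Or.inl h
        · exact Or.inr (Or.inr ⟨y, h, e.symm⟩)
      intro x hx0 y hy0 hxy
      rcases hmem x hx0 with rfl | ⟨x, hx, rfl⟩ | ⟨x, hx, rfl⟩ <;>
      rcases hmem y hy0 with rfl | ⟨y, hy, rfl⟩ | ⟨y, hy, rfl⟩
      · omega
      · rw [G1, Gs y hy]; have := hga y hy; omega
      · rw [G1, Gt y hy]; have := hfb y hy; omega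
      · omega
      · rw [Gs x hx, Gs y hy]
        have := hg hx hy (by omega : x < y)
        omega
      · rw [Gs x hx, Gt y hy]; have := hga x hx; have := hfb y hy; omega
      · omega
      · have := le_nL hy; omega
      · rw [Gt x hx, Gt y hy]
        have := hf hx hy (by omega : x < y)
        omega
    · have e : (pat2 σ τ).map G =
          1 :: ((σ.map g).map (· + k) ++ 1 :: (τ.map f).map (· + k')) := by
        simp only [pat2, List.map_cons, List.map_append, G1, List.map_map]
        congr 2
        · exact List.map_congr_left Gs
        · congr 1
          exact List.map_congr_left Gt
      rw [e]
      exact ((hgs.map _).append ((hfs.map _).cons_cons 1)).cons_cons 1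

/-- non-crossing RGFs -/
def V (w : List ℕ) : Prop := IsRGF w ∧ NonCrossing w

theorem V_pos {w : List ℕ} (h : V w) : ∀ x ∈ w, 1 ≤ x := h.1.1

theorem avoids_J {σ τ : List ℕ} (hσ : IsRGF σ) (hσc : σ = [] ∨ Connected σ)
    (hτ : IsRGF τ) (hτc : τ = [] ∨ Connected τ) {l : List (List ℕ)} (hl : ∀ c ∈ l, V c) :
    PatAvoids (J 1 l) (pat2 σ τ) ↔ (∀ c ∈ l, PatAvoids c (pat2 σ τ)) ∧
      l.Pairwise (fun a b => ¬ (PatContains a σ ∧ PatContains b τ)) := by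
  have hl' : ∀ c ∈ l, ∀ x ∈ c, 1 ≤ x := fun c hc => V_pos (hl c hc)
  rw [PatAvoids, not_iff_comm]
  constructor
  · intro h
    apply contains_bwd hσ hτ le_rfl hl'
    by_contra hcon
    rw [not_or, not_not] at hcon
    exact h ⟨fun c hc hp => hcon.1 ⟨c, hc, hp⟩, hcon.2⟩
  · rintro h ⟨h1, h2⟩
    rcases contains_fwd hσ hσc hτ hτc le_rfl hl' h with ⟨c, hc, h3⟩ | h3
    · exact h1 c hc h3
    · exact h3 h2

theorem contains_left {w σ τ : List ℕ} (h : PatContains w (pat2 σ τ)) : PatContains w σ := by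
  obtain ⟨g, hg, hs⟩ := (patContains_iff _ _).1 h
  have hsub : (σ.map (· + 1)).Sublist (pat2 σ τ) :=
    (List.sublist_append_left _ _).trans (List.sublist_cons_self _ _)
  exact contains_of_shift 1 g (hg.mono (fun x hx => hsub.subset hx)) ((hsub.map g).trans hs)

theorem contains_right {w σ τ : List ℕ} (h : PatContains w (pat2 σ τ)) : PatContains w τ := by
  obtain ⟨g, hg, hs⟩ := (patContains_iff _ _).1 h
  have hsub : (τ.map (· + (1 + nLetters σ))).Sublist (pat2 σ τ) :=
    (List.sublist_cons_self _ _).trans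
      ((List.sublist_append_right _ _).trans (List.sublist_cons_self _ _))
  exact contains_of_shift (1 + nLetters σ) g (hg.mono (fun x hx => hsub.subset hx))
    ((hsub.map g).trans hs)

theorem R_bound {m : ℕ} {w : List ℕ} (h : R m w) : ∀ x ∈ w, x < m + w.length + 1 := by
  induction w generalizing m with
  | nil => simp
  | cons y w ih =>
    intro x hx
    obtain ⟨h1, h2, h3⟩ := h
    rcases List.mem_cons.1 hx with hx | hx
    · subst hx; simp; omega
    · have := ih h3 x hx; simp; omega

theorem finite_V (n : ℕ) : {w : List ℕ | V w ∧ w.length = n}.Finite := by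
  refine ((List.finite_length_eq (Fin (n + 1)) n).image (List.map Fin.val)).subset ?_
  rintro w ⟨hw, rfl⟩
  have hb := R_bound ((isRGF_iff _).1 hw.1)
  refine ⟨w.pmap (fun x hx => (⟨x, hx⟩ : Fin (w.length + 1)))
    (fun x hx => by have := hb x hx; omega), by simp, ?_⟩
  rw [List.map_pmap]
  simp

/-- words of `V` of length `n` satisfying `A` -/
def C (A : List ℕ → Prop) (n : ℕ) : Set (List ℕ) := {w | V w ∧ w.length = n ∧ A w}

theorem finite_C (A : List ℕ → Prop) (n : ℕ) : (C A n).Finite :=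
  (finite_V n).subset (fun _ h => ⟨h.1, h.2.1⟩)

theorem exists_class_map {S T A B : List ℕ → Prop}
    (hAS : ∀ w, ¬ S w → A w) (hAT : ∀ w, ¬ T w → A w)
    (hBS : ∀ w, ¬ S w → B w) (hBT : ∀ w, ¬ T w → B w) (m : ℕ)
    (h : (C A m).ncard = (C B m).ncard) :
    ∃ f : List ℕ → List ℕ, (∀ w ∈ C A m, f w ∈ C B m ∧ (S (f w) ↔ S w) ∧ (T (f w) ↔ T w)) ∧
      Set.InjOn f (C A m) := by
  classical
  let Q : Set (List ℕ) := {w | S w ∧ T w}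
  have hd : C A m \ Q = C B m \ Q := by
    ext w
    simp only [C, Q, Set.mem_sdiff, Set.mem_ofPred_eq]
    have h1 := hAS w
    have h2 := hAT w
    have h3 := hBS w
    have h4 := hBT w
    tauto
  have e1 := Set.ncard_inter_add_ncard_sdiff_eq_ncard (C A m) Q (finite_C A m)
  have e2 := Set.ncard_inter_add_ncard_sdiff_eq_ncard (C B m) Q (finite_C B m)
  rw [hd] at e1
  have e3 : (C A m ∩ Q).ncard = (C B m ∩ Q).ncard := by omega
  have fA : (C A m ∩ Q).Finite := (finite_C A m).subset Set.inter_subset_left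
  have fB : (C B m ∩ Q).Finite := (finite_C B m).subset Set.inter_subset_left
  have e4 : (C A m ∩ Q).encard = (C B m ∩ Q).encard := by
    rw [← fA.cast_ncard_eq, ← fB.cast_ncard_eq, e3]
  obtain ⟨e, he⟩ := fA.exists_bijOn_of_encard_eq e4
  refine ⟨fun w => if w ∈ Q then e w else w, ?_, ?_⟩
  · intro w hw
    by_cases hq : w ∈ Q
    · have := he.mapsTo ⟨hw, hq⟩
      simp only [hq, if_true]
      have h1 : S (e w) ∧ T (e w) := this.2
      have h2 : S w ∧ T w := hq
      exact ⟨this.1, by tauto, by tauto⟩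
    · simp only [hq, if_false]
      have : w ∈ C B m \ Q := by rw [← hd]; exact ⟨hw, hq⟩
      exact by simpa using this.1
  · intro w hw w' hw' hww
    by_cases hq : w ∈ Q <;> by_cases hq' : w' ∈ Q <;> simp only [hq, hq', if_true, if_false] at hww
    · exact he.injOn ⟨hw, hq⟩ ⟨hw', hq'⟩ hww
    · have := (he.mapsTo ⟨hw, hq⟩).2
      rw [hww] at this
      exact absurd this hq'
    · have := (he.mapsTo ⟨hw', hq'⟩).2
      rw [← hww] at this
      exact absurd this hq
    · exact hww

theorem V_J {l : List (List ℕ)} (hl : ∀ c ∈ l, V c) : V (J 1 l) :=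
  ⟨(isRGF_iff _).2 (J_R (fun c hc => (isRGF_iff _).1 (hl c hc).1) le_rfl (by simp)),
    J_nc le_rfl (fun c hc => V_pos (hl c hc)) (fun c hc => (hl c hc).2)⟩

theorem map_inj_on {f : List ℕ → List ℕ} {D : Set (List ℕ)} (hf : Set.InjOn f D)
    {l l' : List (List ℕ)} (hl : ∀ c ∈ l, c ∈ D) (hl' : ∀ c ∈ l', c ∈ D)
    (h : l.map f = l'.map f) : l = l' := by
  induction l generalizing l' with
  | nil => simpa using h.symm
  | cons c l ih =>
    cases l' with
    | nil => simp at h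
    | cons d l' =>
      simp only [List.map_cons, List.cons.injEq] at h
      rw [hf (hl c (by simp)) (hl' d (by simp)) h.1,
        ih (fun c hc => hl c (by simp [hc])) (fun c hc => hl' c (by simp [hc])) h.2]

theorem step {S T A B : List ℕ → Prop}
    (hA : ∀ l, (∀ c ∈ l, V c) →
      (A (J 1 l) ↔ (∀ c ∈ l, A c) ∧ l.Pairwise (fun a b => ¬ (S a ∧ T b))))
    (hB : ∀ l, (∀ c ∈ l, V c) →
      (B (J 1 l) ↔ (∀ c ∈ l, B c) ∧ l.Pairwise (fun a b => ¬ (T a ∧ S b))))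
    (hAS : ∀ w, ¬ S w → A w) (hAT : ∀ w, ¬ T w → A w)
    (hBS : ∀ w, ¬ S w → B w) (hBT : ∀ w, ¬ T w → B w) (n : ℕ)
    (ih : ∀ m < n, (C A m).ncard = (C B m).ncard) : (C A n).ncard ≤ (C B n).ncard := by
  have h1 : ∀ m, ∃ f : List ℕ → List ℕ, m < n →
      (∀ w ∈ C A m, f w ∈ C B m ∧ (S (f w) ↔ S w) ∧ (T (f w) ↔ T w)) ∧
      Set.InjOn f (C A m) := by
    intro m
    by_cases hm : m < n
    · obtain ⟨f, hf⟩ := exists_class_map hAS hAT hBS hBT m (ih m hm)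
      exact ⟨f, fun _ => hf⟩
    · exact ⟨id, fun h => absurd h hm⟩
  choose e he using h1
  let f : List ℕ → List ℕ := fun w => e w.length w
  let D : Set (List ℕ) := {w | V w ∧ A w ∧ w.length < n}
  have hfD : ∀ w ∈ D, V (f w) ∧ B (f w) ∧ (f w).length = w.length ∧
      (S (f w) ↔ S w) ∧ (T (f w) ↔ T w) := by
    rintro w ⟨hw, hwA, hwn⟩
    obtain ⟨h1, h2, h3⟩ := (he w.length hwn).1 w ⟨hw, rfl, hwA⟩
    exact ⟨h1.1, h1.2.2, h1.2.1, h2, h3⟩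
  have hfi : Set.InjOn f D := by
    intro w hw w' hw' h
    have hl : w'.length = w.length := by
      rw [← (hfD w hw).2.2.1, ← (hfD w' hw').2.2.1, h]
    refine (he w.length hw.2.2).2 ⟨hw.1, rfl, hw.2.1⟩ ⟨hw'.1, hl, hw'.2.1⟩ ?_
    simp only [f, hl] at h
    exact h
  have h2 : ∀ w, ∃ l, V w → (∀ c ∈ l, V c) ∧ J 1 l = w := by
    intro w
    by_cases hw : V w
    · obtain ⟨l, hl⟩ := J_surj hw.1 hw.2
      exact ⟨l, fun _ => hl⟩
    · exact ⟨[], fun h => absurd h hw⟩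
  choose dec hdec using h2
  have hdD : ∀ w ∈ C A n, ∀ c ∈ dec w, c ∈ D := by
    rintro w ⟨hw, hwn, hwA⟩ c hc
    obtain ⟨h1, h2⟩ := hdec w hw
    have h3 := (hA _ h1).1 (by rw [h2]; exact hwA)
    refine ⟨h1 c hc, h3.1 c hc, ?_⟩
    have := J_length_lt (s := 1) hc
    rw [h2] at this
    omega
  have hV : ∀ w ∈ C A n, ∀ c ∈ ((dec w).map f).reverse, V c := by
    intro w hw c hc
    simp only [List.mem_reverse, List.mem_map] at hc
    obtain ⟨d, hd, rfl⟩ := hc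
    exact (hfD d (hdD w hw d hd)).1
  refine Set.ncard_le_ncard_of_injOn (fun w => J 1 ((dec w).map f).reverse) ?_ ?_ (finite_C B n)
  · intro w hw
    obtain ⟨h1, h2⟩ := hdec w hw.1
    refine ⟨V_J (hV w hw), ?_, ?_⟩
    · rw [← hw.2.1]
      conv_rhs => rw [← h2]
      rw [J_length, J_length, List.map_reverse, List.sum_reverse, List.map_map]
      congr 1
      apply List.map_congr_left
      intro c hc
      simp [(hfD c (hdD w hw c hc)).2.2.1]
    · rw [hB _ (hV w hw)]
      have h3 := (hA _ h1).1 (by rw [h2]; exact hw.2.2)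
      constructor
      · intro c hc
        simp only [List.mem_reverse, List.mem_map] at hc
        obtain ⟨d, hd, rfl⟩ := hc
        exact (hfD d (hdD w hw d hd)).2.1
      · rw [List.pairwise_reverse, List.pairwise_map]
        refine h3.2.imp_of_mem ?_
        intro a b ha hb hab
        have h4 := (hfD a (hdD w hw a ha)).2.2.2
        have h5 := (hfD b (hdD w hw b hb)).2.2.2
        tauto
  · intro w hw w' hw' h
    have h3 := J_inj le_rfl (fun c hc => V_pos (hV w hw c hc))
      (fun c hc => V_pos (hV w' hw' c hc)) h
    have h4 := map_inj_on hfi (hdD w hw) (hdD w' hw') (List.reverse_injective h3)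
    rw [← (hdec w hw.1).2, ← (hdec w' hw'.1).2, h4]

theorem ncAvoidCount_eq (n : ℕ) (p : List ℕ) :
    ncAvoidCount n p = (C (fun w => PatAvoids w p) n).ncard := by
  unfold ncAvoidCount C V
  congr 1
  ext w
  simp only [Set.mem_ofPred_eq]
  tauto

end NC11

/-- Theorem 3.7: for `σ, τ` each empty or connected, the patterns `1[σ]1[τ]`
and `1[τ]1[σ]` are nc-equivalent. -/
theorem stmt11 (σ τ : List ℕ)
    (hσ : IsRGF σ) (hσnc : NonCrossing σ) (hσc : σ = [] ∨ Connected σ)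
    (hτ : IsRGF τ) (hτnc : NonCrossing τ) (hτc : τ = [] ∨ Connected τ) :
    ∀ n : ℕ, ncAvoidCount n (pat2 σ τ) = ncAvoidCount n (pat2 τ σ) := by
  have hA := fun l (hl : ∀ c ∈ l, NC11.V c) => NC11.avoids_J hσ hσc hτ hτc hl
  have hB := fun l (hl : ∀ c ∈ l, NC11.V c) => NC11.avoids_J hτ hτc hσ hσc hl
  have l1 : ∀ w, ¬ PatContains w σ → PatAvoids w (pat2 σ τ) :=
    fun w h h' => h (NC11.contains_left h')
  have l2 : ∀ w, ¬ PatContains w τ → PatAvoids w (pat2 σ τ) :=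
    fun w h h' => h (NC11.contains_right h')
  have l3 : ∀ w, ¬ PatContains w σ → PatAvoids w (pat2 τ σ) :=
    fun w h h' => h (NC11.contains_right h')
  have l4 : ∀ w, ¬ PatContains w τ → PatAvoids w (pat2 τ σ) :=
    fun w h h' => h (NC11.contains_left h')
  intro n
  rw [NC11.ncAvoidCount_eq, NC11.ncAvoidCount_eq]
  induction n using Nat.strong_induction_on with
  | _ n ih =>
    exact le_antisymm (NC11.step hA hB l1 l2 l3 l4 n ih)
      (NC11.step hB hA l4 l3 l2 l1 n (fun m hm => (ih m hm).symm))
end
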